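/- Let Q(x,y) = a x² + b x y + c y² be a primitive, positive definite, integral binary quadratic form (a, b, c ∈ ℤ, gcd(a,b,c) = 1, a > 0, b² − 4ac < 0). Then there exists a prime number p and integers x, y with Q(x, y) = p. -/

import Mathlib

/-!
In the imaginary quadratic field of discriminant proportional to `b² - 4ac`, the ideals in a ray
class correspond to the elements of a coset of a lattice in `ℂ`. The theta series of the cosets of
a lattice all have the same polar part at `0`, so the Dirichlet series of the ray classes have, up
to a common residue, entire continuations, and the `L`-series of the nontrivial ray class characters
are entire. They do not vanish at `1`: otherwise the product of all the `L`-series, which has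
nonnegative coefficients, would be entire and hence positive at `0` by Landau's theorem, while the
factor `1 / Γ(s)` makes it vanish there. As for Dirichlet's theorem, every ray class therefore
contains an ideal of prime norm.

The form is equivalent to one whose leading coefficient `a` is prime to a modulus `M` divisible by
the discriminant. Let `τ` be a root of `τ² + bτ + ac` and `J = (a, τ)`, an ideal of norm `a`. An
ideal of prime norm `p` in the inverse of the ray class of `J` modulo `M` multiplies `J` to an ideal
`(α)` with `α ≡ 1` modulo `M`. Since `M` clears the index of `ℤ + ℤτ`, this gives `α = ax - yτ`, and
comparing norms, `a p = N(α) = a (ax² + bxy + cy²)`.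
-/

open Filter Topology Asymptotics

open scoped Real

section GaussianSums

/-- The sum of the Gaussian `exp (-a x²)` over the translate `ℤ + r`. -/
noncomputable def gaussianSum (a r : ℝ) : ℝ := ∑' n : ℤ, rexp (-(a * (n + r) ^ 2))

variable {a b : ℝ}

lemma summable_gaussianSum (ha : 0 < a) (r : ℝ) :
    Summable fun n : ℤ => rexp (-(a * (n + r) ^ 2)) := by
  have hbound := summable_pow_mul_jacobiTheta₂_term_bound (|r| * a / π) (T := a / π)
    (by positivity) 0
  refine Summable.of_nonneg_of_le (fun _ => (Real.exp_pos _).le) (fun n => ?_) hbound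
  have hexp : -π * (a / π * (n : ℝ) ^ 2 - 2 * (|r| * a / π) * |(n : ℝ)|) =
      -(a * n ^ 2) + 2 * |r| * a * |(n : ℝ)| := by
    field_simp
    ring
  have hcross : -((n : ℝ) * r) ≤ |(n : ℝ)| * |r| := by
    rw [← abs_mul]
    exact neg_le_abs _
  simp only [pow_zero, Int.cast_abs, one_mul, Real.exp_le_exp, hexp]
  nlinarith [mul_le_mul_of_nonneg_left hcross ha.le, mul_nonneg ha.le (sq_nonneg r)]

lemma gaussianSum_nonneg (a r : ℝ) : 0 ≤ gaussianSum a r :=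
  tsum_nonneg fun _ => (Real.exp_pos _).le

lemma gaussianSum_eq_sqrt_mul_tsum (ha : 0 < a) (r : ℝ) :
    (gaussianSum a r : ℂ) = √(π / a) *
      ∑' n : ℤ, Complex.exp
        (((-(π ^ 2 / a * n ^ 2) : ℝ) : ℂ) + (-2 * π * r * n : ℝ) * Complex.I) := by
  have hpos : 0 < π / a := by positivity
  have ha' : (a : ℂ) ≠ 0 := by exact_mod_cast ha.ne'
  have hπ : (π : ℂ) ≠ 0 := by exact_mod_cast Real.pi_ne_zero
  have hpoisson := Complex.tsum_exp_neg_quadratic (a := ((π / a : ℝ) : ℂ))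
    (by rwa [Complex.ofReal_re]) (-(Complex.I * r))
  have hleft (n : ℤ) : -π * ((π / a : ℝ) : ℂ) * n ^ 2 + 2 * π * (-(Complex.I * r)) * n =
      ((-(π ^ 2 / a * n ^ 2) : ℝ) : ℂ) + (-2 * π * r * n : ℝ) * Complex.I := by
    push_cast
    field_simp
  have hshift : Complex.I * (-(Complex.I * r)) = r := by
    rw [mul_neg, ← mul_assoc, Complex.I_mul_I, neg_one_mul, neg_neg]
  have hright (n : ℤ) : -π / ((π / a : ℝ) : ℂ) * (n + Complex.I * (-(Complex.I * r))) ^ 2 =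
      ((-(a * (n + r) ^ 2) : ℝ) : ℂ) := by
    rw [hshift]
    push_cast
    field_simp
  have hsqrt : ((π / a : ℝ) : ℂ) ^ (1 / 2 : ℂ) = (√(π / a) : ℝ) := by
    rw [Real.sqrt_eq_rpow, Complex.ofReal_cpow hpos.le]
    norm_num
  have hsqrt_ne : ((√(π / a) : ℝ) : ℂ) ≠ 0 := by exact_mod_cast (Real.sqrt_pos.2 hpos).ne'
  simp_rw [hleft, hright, hsqrt] at hpoisson
  rw [hpoisson, ← mul_assoc, mul_one_div_cancel hsqrt_ne, one_mul, gaussianSum]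
  push_cast
  rfl

lemma exp_neg_pi_sq_div_mul_sq_le (ha : 0 < a) (N : ℕ) {n : ℤ} (hn : n ≠ 0) :
    rexp (-(π ^ 2 / a * n ^ 2)) ≤ (N + 1).factorial * a ^ (N + 1) * (1 / (n : ℝ) ^ 2) := by
  have hn1 : (1 : ℝ) ≤ (n : ℝ) ^ 2 := by exact_mod_cast Int.add_one_le_of_lt (sq_pos_of_ne_zero hn)
  have hpi : (1 : ℝ) ≤ π ^ 2 := by nlinarith [Real.pi_gt_three]
  have hx : (0 : ℝ) < n ^ 2 / a := by positivity
  calc rexp (-(π ^ 2 / a * n ^ 2)) ≤ rexp (-(n ^ 2 / a)) := by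
        rw [Real.exp_le_exp, show π ^ 2 / a * (n : ℝ) ^ 2 = π ^ 2 * (n ^ 2 / a) by ring]
        nlinarith
    _ ≤ (((n : ℝ) ^ 2 / a) ^ (N + 1) / (N + 1).factorial)⁻¹ := by
        rw [Real.exp_neg]
        exact inv_anti₀ (by positivity) (Real.pow_div_factorial_le_exp _ hx.le _)
    _ = (N + 1).factorial * a ^ (N + 1) / ((n : ℝ) ^ 2) ^ (N + 1) := by
        rw [div_pow, inv_div, div_div_eq_mul_div]
    _ ≤ (N + 1).factorial * a ^ (N + 1) * (1 / (n : ℝ) ^ 2) := by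
        rw [mul_one_div]
        gcongr
        exact le_self_pow₀ hn1 N.succ_ne_zero

lemma exists_abs_gaussianSum_sub_le (N : ℕ) : ∃ C : ℝ, 0 ≤ C ∧ ∀ a : ℝ, 0 < a → ∀ r : ℝ,
    |gaussianSum a r - √(π / a)| ≤ √(π / a) * (C * a ^ (N + 1)) := by
  have hsq : Summable fun n : ℤ => 1 / (n : ℝ) ^ 2 :=
    Real.summable_one_div_int_pow.2 one_lt_two
  refine ⟨(N + 1).factorial * ∑' n : ℤ, 1 / (n : ℝ) ^ 2,
    mul_nonneg (by positivity) (tsum_nonneg fun n => by positivity), fun a ha r => ?_⟩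
  set f : ℤ → ℂ := fun n =>
    Complex.exp (((-(π ^ 2 / a * n ^ 2) : ℝ) : ℂ) + (-2 * π * r * n : ℝ) * Complex.I) with hf
  have hf0 : f 0 = 1 := by simp [hf]
  have hnorm (n : ℤ) : ‖f n‖ = rexp (-(π ^ 2 / a * n ^ 2)) := by
    rw [hf, Complex.norm_exp, Complex.add_re, Complex.ofReal_re, Complex.re_ofReal_mul,
      Complex.I_re, mul_zero, add_zero]
  have hbound (n : ℤ) : ‖if n = 0 then 0 else f n‖ ≤
      (N + 1).factorial * a ^ (N + 1) * (1 / (n : ℝ) ^ 2) := by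
    split_ifs with hn
    · simp [hn]
    · exact (hnorm n).trans_le (exp_neg_pi_sq_div_mul_sq_le ha N hn)
  have hsum : Summable f := by
    rw [← (Set.finite_singleton (0 : ℤ)).summable_compl_iff]
    exact .of_norm_bounded ((hsq.mul_left ((N + 1).factorial * a ^ (N + 1))).subtype _) fun n =>
      (hnorm n).trans_le (exp_neg_pi_sq_div_mul_sq_le ha N n.2)
  have hdiff : ((gaussianSum a r - √(π / a) : ℝ) : ℂ) =
      (√(π / a) : ℝ) * ∑' n, if n = 0 then 0 else f n := by
    rw [Complex.ofReal_sub, gaussianSum_eq_sqrt_mul_tsum ha, hsum.tsum_eq_add_tsum_ite 0, hf0]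
    ring
  rw [← Real.norm_eq_abs, ← Complex.norm_real, hdiff, norm_mul, Complex.norm_real,
    Real.norm_of_nonneg (Real.sqrt_nonneg _)]
  gcongr
  refine (tsum_of_norm_bounded (hsq.mul_left _).hasSum hbound).trans_eq ?_
  rw [tsum_mul_left, mul_right_comm]

lemma abs_tsum_mul_sub_le {ι : Type*} {g S : ι → ℝ} {m ε : ℝ} (hg : Summable g)
    (hg0 : ∀ i, 0 ≤ g i) (hS : ∀ i, |S i - m| ≤ ε) :
    |∑' i, g i * S i - (∑' i, g i) * m| ≤ (∑' i, g i) * ε := by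
  have hbound (i : ι) : ‖g i * (S i - m)‖ ≤ g i * ε := by
    rw [norm_mul, Real.norm_of_nonneg (hg0 i)]
    exact mul_le_mul_of_nonneg_left (hS i) (hg0 i)
  have hsum : Summable fun i => g i * (S i - m) := .of_norm_bounded (hg.mul_right ε) hbound
  have hsplit : ∑' i, g i * S i - (∑' i, g i) * m = ∑' i, g i * (S i - m) := by
    rw [← tsum_mul_right, sub_eq_iff_eq_add, ← hsum.tsum_add (hg.mul_right m)]
    exact tsum_congr fun i => by ring
  rw [hsplit, ← tsum_mul_right]
  exact tsum_of_norm_bounded (hg.mul_right ε).hasSum hbound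

lemma exp_neg_add_eq_mul (a b s r q : ℝ) (y x : ℤ) :
    rexp (-(a * (x + (s * y + r)) ^ 2 + b * (y + q) ^ 2)) =
      rexp (-(b * (y + q) ^ 2)) * rexp (-(a * (x + (s * y + r)) ^ 2)) := by
  rw [← Real.exp_add]
  ring_nf

lemma summable_planar_gaussian (ha : 0 < a) (hb : 0 < b) (s r q : ℝ) :
    Summable fun p : ℤ × ℤ => rexp (-(a * (p.2 + (s * p.1 + r)) ^ 2 + b * (p.1 + q) ^ 2)) := by
  obtain ⟨C, -, hC⟩ := exists_abs_gaussianSum_sub_le 0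
  rw [summable_prod_of_nonneg fun p => (Real.exp_pos _).le]
  simp_rw [exp_neg_add_eq_mul, tsum_mul_left]
  refine ⟨fun y => (summable_gaussianSum ha _).mul_left _, ?_⟩
  refine Summable.of_nonneg_of_le (fun y => mul_nonneg (Real.exp_pos _).le (gaussianSum_nonneg _ _))
    (fun y => mul_le_mul_of_nonneg_left ?_ (Real.exp_pos _).le)
    ((summable_gaussianSum hb q).mul_right (√(π / a) + √(π / a) * (C * a ^ (0 + 1))))
  exact sub_le_iff_le_add'.1 (abs_le.1 (hC a ha _)).2

lemma exists_abs_planar_gaussian_sub_le (N : ℕ) : ∃ C : ℝ, 0 ≤ C ∧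
    ∀ a b : ℝ, 0 < a → 0 < b → ∀ s r q : ℝ,
    |∑' p : ℤ × ℤ, rexp (-(a * (p.2 + (s * p.1 + r)) ^ 2 + b * (p.1 + q) ^ 2)) -
        √(π / b) * √(π / a)| ≤
      √(π / b) * √(π / a) *
        ((1 + C * b ^ (N + 1)) * (C * a ^ (N + 1)) + C * b ^ (N + 1)) := by
  obtain ⟨C, hC0, hC⟩ := exists_abs_gaussianSum_sub_le N
  refine ⟨C, hC0, fun a b ha hb s r q => ?_⟩
  rw [(summable_planar_gaussian ha hb s r q).tsum_prod]
  simp_rw [exp_neg_add_eq_mul, tsum_mul_left]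
  have hinner := abs_tsum_mul_sub_le (summable_gaussianSum hb q) (fun _ => (Real.exp_pos _).le)
    fun y : ℤ => hC a ha (s * y + r)
  have houter := hC b hb q
  change |_ - gaussianSum b q * _| ≤ gaussianSum b q * _ at hinner
  have hle : gaussianSum b q ≤ √(π / b) * (1 + C * b ^ (N + 1)) := by
    linarith [(abs_le.1 houter).2]
  set A := √(π / a)
  set B := √(π / b)
  set G := gaussianSum b q
  calc _ ≤ |_ - G * A| + |G * A - B * A| := abs_sub_le _ _ _
    _ ≤ G * (A * (C * a ^ (N + 1))) + B * (C * b ^ (N + 1)) * A := by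
        rw [← sub_mul, abs_mul, abs_of_nonneg (Real.sqrt_nonneg _ : 0 ≤ A)]
        gcongr
        exact hinner
    _ ≤ B * (1 + C * b ^ (N + 1)) * (A * (C * a ^ (N + 1))) + B * (C * b ^ (N + 1)) * A := by
        gcongr
    _ = _ := by ring

end GaussianSums

section ThetaExpansion

/-- `HasThetaExpansion θ κ` says that `θ t = κ / t + O(t ^ N)` as `t → 0⁺`, for every `N`: the
behaviour of the theta series of a planar lattice, `κ` being proportional to the density of the
lattice. -/
def HasThetaExpansion (θ : ℝ → ℝ) (κ : ℝ) : Prop :=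
  ∀ N : ℕ, (fun t => θ t - κ / t) =O[𝓝[>] 0] fun t => t ^ N

namespace HasThetaExpansion

variable {θ : ℝ → ℝ} {κ κ' : ℝ}

lemma tendsto_mul (h : HasThetaExpansion θ κ) :
    Tendsto (fun t => t * θ t) (𝓝[>] 0) (𝓝 κ) := by
  have hid : Tendsto (fun t : ℝ => t) (𝓝[>] 0) (𝓝 0) :=
    tendsto_nhdsWithin_of_tendsto_nhds tendsto_id
  have hbdd : (fun t => θ t - κ / t) =O[𝓝[>] 0] fun _ => (1 : ℝ) := by simpa using h 0
  have hlim := (hid.zero_mul_isBoundedUnder_le hbdd.isBoundedUnder_le).add_const κ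
  rw [zero_add] at hlim
  refine hlim.congr' ?_
  filter_upwards [self_mem_nhdsWithin] with t (ht : 0 < t)
  field_simp
  ring

lemma unique (h : HasThetaExpansion θ κ) (h' : HasThetaExpansion θ κ') : κ = κ' :=
  tendsto_nhds_unique h.tendsto_mul h'.tendsto_mul

lemma congr {θ' : ℝ → ℝ} (h : HasThetaExpansion θ κ) (hθ : ∀ t, 0 < t → θ t = θ' t) :
    HasThetaExpansion θ' κ := fun N =>
  (h N).congr' (by filter_upwards [self_mem_nhdsWithin] with t ht; rw [hθ t ht]) .rfl

lemma sum {ι : Type*} {s : Finset ι} {θ : ι → ℝ → ℝ} {κ : ι → ℝ}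
    (h : ∀ i ∈ s, HasThetaExpansion (θ i) (κ i)) :
    HasThetaExpansion (fun t => ∑ i ∈ s, θ i t) (∑ i ∈ s, κ i) := fun N =>
  (IsBigO.sum fun i hi => h i hi N).congr_left fun t => by
    simp only [Finset.sum_apply, Finset.sum_sub_distrib, Finset.sum_div]

lemma const_mul (h : HasThetaExpansion θ κ) (c : ℝ) :
    HasThetaExpansion (fun t => c * θ t) (c * κ) := fun N =>
  ((h N).const_mul_left c).congr_left fun t => by ring

lemma comp_div (h : HasThetaExpansion θ κ) {c : ℝ} (hc : 0 < c) :
    HasThetaExpansion (fun t => θ (t / c)) (κ * c) := fun N => by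
  have hlim : Tendsto (fun t => t / c) (𝓝[>] 0) (𝓝[>] 0) := by
    refine tendsto_nhdsWithin_iff.2 ⟨?_, ?_⟩
    · exact tendsto_nhdsWithin_of_tendsto_nhds
        ((continuous_id.div_const c).tendsto' _ _ (zero_div c))
    · filter_upwards [self_mem_nhdsWithin] with t ht using div_pos ht hc
  refine (((h N).comp_tendsto hlim).congr_left fun t => ?_).trans ?_
  · simp only [Function.comp_apply, div_div_eq_mul_div]
  · refine IsBigO.of_bound (c⁻¹ ^ N) (Eventually.of_forall fun t => le_of_eq ?_)
    rw [Function.comp_apply, div_eq_inv_mul, mul_pow, norm_mul, Real.norm_of_nonneg (by positivity)]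

end HasThetaExpansion

variable {u v : ℂ}

lemma mul_norm_lattice_sq (hu : u ≠ 0) (huv : (v / u).im ≠ 0) (β : ℂ) (t : ℝ) (p : ℤ × ℤ) :
    t * ‖β + p.2 * u + p.1 * v‖ ^ 2 =
      t * ‖u‖ ^ 2 * (p.2 + ((v / u).re * p.1 + (β / u).re)) ^ 2 +
        t * (‖u‖ ^ 2 * (v / u).im ^ 2) * (p.1 + (β / u).im / (v / u).im) ^ 2 := by
  have hfactor : β + p.2 * u + p.1 * v = u * (β / u + p.2 + p.1 * (v / u)) := by
    field_simp
  rw [hfactor, norm_mul, mul_pow, Complex.sq_norm (_ + _), Complex.normSq_apply]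
  simp only [Complex.add_re, Complex.add_im, Complex.mul_re, Complex.mul_im, Complex.intCast_re,
    Complex.intCast_im, zero_mul, sub_zero, add_zero]
  field_simp
  ring

lemma summable_lattice_gaussian (hu : u ≠ 0) (huv : (v / u).im ≠ 0) (β : ℂ) {t : ℝ} (ht : 0 < t) :
    Summable fun p : ℤ × ℤ => rexp (-(t * ‖β + p.2 * u + p.1 * v‖ ^ 2)) := by
  have := norm_pos_iff.2 hu
  simp_rw [mul_norm_lattice_sq hu huv]
  exact summable_planar_gaussian (by positivity) (by positivity) _ _ _

lemma hasThetaExpansion_lattice (hu : u ≠ 0) (huv : (v / u).im ≠ 0) (β : ℂ) :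
    HasThetaExpansion (fun t => ∑' p : ℤ × ℤ, rexp (-(t * ‖β + p.2 * u + p.1 * v‖ ^ 2)))
      (√(π / (‖u‖ ^ 2 * (v / u).im ^ 2)) * √(π / ‖u‖ ^ 2)) := fun N => by
  obtain ⟨C, hC0, hC⟩ := exists_abs_planar_gaussian_sub_le N
  have := norm_pos_iff.2 hu
  simp_rw [mul_norm_lattice_sq hu huv]
  set A := ‖u‖ ^ 2
  set B := ‖u‖ ^ 2 * (v / u).im ^ 2
  have : 0 < A := by positivity
  have : 0 < B := by positivity
  set κ := √(π / B) * √(π / A)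
  refine IsBigO.of_bound (κ * ((1 + C * B ^ (N + 1)) * (C * A ^ (N + 1)) + C * B ^ (N + 1))) ?_
  filter_upwards [Ioc_mem_nhdsGT one_pos] with t ⟨ht, ht1⟩
  have hsqrt (D : ℝ) : √(π / (t * D)) = √(π / D) / √t := by
    rw [mul_comm, ← div_div, Real.sqrt_div' _ ht.le]
  have hκ : √(π / (t * B)) * √(π / (t * A)) = κ / t := by
    rw [hsqrt, hsqrt, div_mul_div_comm, Real.mul_self_sqrt ht.le]
  rw [Real.norm_eq_abs, Real.norm_of_nonneg (by positivity)]
  refine (hκ ▸ hC (t * A) (t * B) (by positivity) (by positivity) _ _ _).trans ?_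
  calc κ / t * ((1 + C * (t * B) ^ (N + 1)) * (C * (t * A) ^ (N + 1)) + C * (t * B) ^ (N + 1))
      = κ * ((1 + C * (t ^ (N + 1) * B ^ (N + 1))) * (C * A ^ (N + 1)) + C * B ^ (N + 1)) *
          t ^ N := by
        rw [mul_pow, mul_pow]
        field_simp
        ring
    _ ≤ κ * ((1 + C * (1 * B ^ (N + 1))) * (C * A ^ (N + 1)) + C * B ^ (N + 1)) * t ^ N := by
        gcongr
        exact pow_le_one₀ ht.le ht1
    _ = _ := by rw [one_mul]

end ThetaExpansion

section MellinTransform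

open Set MeasureTheory

/-- The theta series `∑ r(n) e^{-nt}` of a sequence `r`, whose Mellin transform is `Γ(s)` times the
Dirichlet series of `r`. -/
noncomputable def thetaSeries (r : ℕ → ℝ) (t : ℝ) : ℝ := ∑' n : ℕ, r n * rexp (-(n * t))

/-- The theta series of `r` with its polar part `κ / t` removed near `0`. -/
noncomputable def regularTheta (r : ℕ → ℝ) (κ : ℝ) (t : ℝ) : ℂ :=
  thetaSeries r t - κ * (Ioc 0 1).indicator (fun t : ℝ => (t : ℂ) ^ (-1 : ℂ)) t

/-- The sequences with the analytic properties of the representation numbers of a positive definite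
binary quadratic form. -/
structure IsThetaSequence (r : ArithmeticFunction ℝ) (κ : ℝ) : Prop where
  nonneg : ∀ n, 0 ≤ r n
  summable : ∀ t, 0 < t → Summable fun n : ℕ => r n * rexp (-(n * t))
  hasThetaExpansion : HasThetaExpansion (thetaSeries r) κ

namespace IsThetaSequence

variable {r : ArithmeticFunction ℝ} {κ : ℝ}

lemma continuousOn_thetaSeries (h : IsThetaSequence r κ) :
    ContinuousOn (thetaSeries r) (Ioi 0) := by
  intro t (ht : 0 < t)
  have hcont : ContinuousOn (thetaSeries r) (Ioi (t / 2)) := by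
    refine continuousOn_tsum (fun n => by fun_prop) (h.summable (t / 2) (half_pos ht))
      fun n x (hx : t / 2 < x) => ?_
    rw [norm_mul, Real.norm_of_nonneg (h.nonneg n), Real.norm_of_nonneg (Real.exp_pos _).le]
    have := h.nonneg n
    gcongr
  exact (hcont.continuousAt (Ioi_mem_nhds (half_lt_self ht))).continuousWithinAt

lemma thetaSeries_isBigO_atTop (h : IsThetaSequence r κ) :
    thetaSeries r =O[atTop] fun t => rexp (-1 * t) := by
  refine IsBigO.of_bound (thetaSeries r 1 * rexp 1) ?_
  filter_upwards [eventually_gt_atTop 1] with t ht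
  rw [Real.norm_of_nonneg (Real.exp_pos _).le, mul_assoc, thetaSeries, thetaSeries,
    ← tsum_mul_right]
  refine tsum_of_norm_bounded ((h.summable 1 one_pos).mul_right _).hasSum fun n => ?_
  rw [norm_mul, Real.norm_of_nonneg (h.nonneg n), Real.norm_of_nonneg (Real.exp_pos _).le]
  rcases n.eq_zero_or_pos with rfl | hn
  · simp [r.map_zero]
  · have hn1 : (1 : ℝ) ≤ n := by exact_mod_cast hn
    rw [mul_assoc, ← Real.exp_add, ← Real.exp_add]
    refine mul_le_mul_of_nonneg_left (Real.exp_le_exp.2 ?_) (h.nonneg n)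
    nlinarith

lemma lseriesSummable (h : IsThetaSequence r κ) {s : ℂ} (hs : 1 < s.re) :
    LSeriesSummable (fun n => (r n : ℂ)) s := by
  refine LSeriesSummable_of_sum_norm_bigO (r := 1) ?_ zero_le_one hs
  have hinv : Tendsto (fun n : ℕ => (n : ℝ)⁻¹) atTop (𝓝[>] 0) :=
    tendsto_inv_atTop_nhdsGT_zero.comp tendsto_natCast_atTop_atTop
  have htheta : ∀ᶠ n : ℕ in atTop, (n : ℝ)⁻¹ * thetaSeries r (n : ℝ)⁻¹ < κ + 1 :=
    (h.hasThetaExpansion.tendsto_mul.comp hinv).eventually_lt_const (lt_add_one κ)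
  refine IsBigO.of_bound (rexp 1 * (κ + 1)) ?_
  filter_upwards [htheta, eventually_gt_atTop 0] with n hθ hn
  have hn0 : (0 : ℝ) < n := by exact_mod_cast hn
  rw [Real.rpow_one, Real.norm_of_nonneg hn0.le,
    Real.norm_of_nonneg (Finset.sum_nonneg fun _ _ => norm_nonneg _)]
  calc ∑ k ∈ Finset.Icc 1 n, ‖(r k : ℂ)‖
      ≤ ∑ k ∈ Finset.Icc 1 n, rexp 1 * (r k * rexp (-(k * (n : ℝ)⁻¹))) := by
        refine Finset.sum_le_sum fun k hk => ?_
        have hkn : (k : ℝ) * (n : ℝ)⁻¹ ≤ 1 :=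
          mul_inv_le_one_of_le₀ (by exact_mod_cast (Finset.mem_Icc.1 hk).2) hn0.le
        rw [Complex.norm_real, Real.norm_of_nonneg (h.nonneg k), mul_left_comm, ← Real.exp_add]
        exact le_mul_of_one_le_right (h.nonneg k) (Real.one_le_exp (by linarith))
    _ ≤ rexp 1 * thetaSeries r (n : ℝ)⁻¹ := by
        rw [← Finset.mul_sum]
        gcongr
        exact (h.summable _ (inv_pos.2 hn0)).sum_le_tsum _ fun i _ =>
          mul_nonneg (h.nonneg i) (Real.exp_pos _).le
    _ ≤ rexp 1 * ((κ + 1) * n) := by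
        gcongr
        rw [← div_le_iff₀ hn0, div_eq_inv_mul]
        exact hθ.le
    _ = _ := by ring

lemma locallyIntegrableOn_regularTheta (h : IsThetaSequence r κ) :
    LocallyIntegrableOn (regularTheta r κ) (Ioi 0) := by
  have hθ : ContinuousOn (fun t => (thetaSeries r t : ℂ)) (Ioi 0) :=
    Complex.continuous_ofReal.comp_continuousOn h.continuousOn_thetaSeries
  have hpow : ContinuousOn (fun t : ℝ => (t : ℂ) ^ (-1 : ℂ)) (Ioi 0) := fun t ht =>
    (Complex.continuousAt_ofReal_cpow_const _ _ (.inr (ne_of_gt ht))).continuousWithinAt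
  have hpolar : LocallyIntegrableOn ((Ioc 0 1).indicator fun t : ℝ => (t : ℂ) ^ (-1 : ℂ))
      (Ioi 0) := fun x hx => by
    obtain ⟨U, hU, hint⟩ := hpow.locallyIntegrableOn (μ := volume) measurableSet_Ioi x hx
    exact ⟨U, hU, hint.indicator measurableSet_Ioc⟩
  exact (hθ.locallyIntegrableOn measurableSet_Ioi).sub (hpolar.smul (κ : ℂ))

lemma regularTheta_isBigO_atTop (h : IsThetaSequence r κ) :
    regularTheta r κ =O[atTop] fun t => rexp (-1 * t) := by
  refine (Complex.isBigO_ofReal_left.2 h.thetaSeries_isBigO_atTop).congr' ?_ .rfl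
  filter_upwards [eventually_gt_atTop 1] with t ht
  rw [regularTheta, indicator_of_notMem fun hmem => hmem.2.not_gt ht, mul_zero, sub_zero]

lemma regularTheta_isBigO_zero (h : IsThetaSequence r κ) (b : ℝ) :
    regularTheta r κ =O[𝓝[>] 0] fun t : ℝ => t ^ (-b) := by
  obtain ⟨N, hN⟩ := exists_nat_ge (-b)
  have hIoc : Ioc (0 : ℝ) 1 ∈ 𝓝[>] (0 : ℝ) := Ioc_mem_nhdsGT one_pos
  have hpow : (fun t : ℝ => t ^ N) =O[𝓝[>] 0] fun t : ℝ => t ^ (-b) := by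
    refine IsBigO.of_bound' ?_
    filter_upwards [hIoc] with t ht
    rw [Real.norm_of_nonneg (pow_nonneg ht.1.le _),
      Real.norm_of_nonneg (Real.rpow_nonneg ht.1.le _), ← Real.rpow_natCast]
    exact Real.rpow_le_rpow_of_exponent_ge ht.1 ht.2 hN
  refine ((Complex.isBigO_ofReal_left.2 (h.hasThetaExpansion N)).trans hpow).congr' ?_ .rfl
  filter_upwards [hIoc] with t ht
  rw [regularTheta, indicator_of_mem ht, Complex.cpow_neg_one, Complex.ofReal_sub,
    Complex.ofReal_div, div_eq_mul_inv]

lemma differentiable_mellin (h : IsThetaSequence r κ) :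
    Differentiable ℂ (mellin (regularTheta r κ)) := fun s =>
  mellin_differentiableAt_of_isBigO_rpow_exp one_pos h.locallyIntegrableOn_regularTheta
    h.regularTheta_isBigO_atTop (h.regularTheta_isBigO_zero (s.re - 1)) (sub_one_lt _)

lemma mellin_thetaSeries (h : IsThetaSequence r κ) {s : ℂ} (hs : 1 < s.re) :
    mellin (fun t => (thetaSeries r t : ℂ)) s = mellin (regularTheta r κ) s + κ / (s - 1) := by
  have hregular : MellinConvergent (regularTheta r κ) s :=
    mellinConvergent_of_isBigO_rpow_exp one_pos h.locallyIntegrableOn_regularTheta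
      h.regularTheta_isBigO_atTop (h.regularTheta_isBigO_zero (s.re - 1)) (sub_one_lt _)
  have hpolar := hasMellin_cpow_Ioc (-1) (s := s)
    (by rw [Complex.neg_re, Complex.one_re]; linarith)
  have hscaled := hasMellin_const_smul hpolar.1 (κ : ℂ)
  have hadd := (hasMellin_add hregular hscaled.1).2
  rw [hscaled.2, hpolar.2, smul_eq_mul, mul_one_div, ← sub_eq_add_neg] at hadd
  rw [← hadd]
  congr 1
  ext t
  simp only [regularTheta, smul_eq_mul, sub_add_cancel]

lemma mellin_thetaSeries_eq_Gamma_mul_LSeries (h : IsThetaSequence r κ) {s : ℂ} (hs : 1 < s.re) :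
    mellin (fun t => (thetaSeries r t : ℂ)) s =
      Complex.Gamma s * LSeries (fun n => (r n : ℂ)) s := by
  have hsummable : Summable fun n : ℕ => ‖(r n : ℂ)‖ / (n : ℝ) ^ s.re := by
    refine (h.lseriesSummable hs).norm.congr fun n => ?_
    rw [LSeries.norm_term_eq]
    split_ifs with hn
    · simp [hn, r.map_zero]
    · rfl
  have hpos (n : ℕ) : (r n : ℂ) = 0 ∨ 0 < (n : ℝ) := by
    rcases n.eq_zero_or_pos with rfl | hn
    · exact .inl (by simp [r.map_zero])
    · exact .inr (by exact_mod_cast hn)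
  have hθ (t : ℝ) (ht : t ∈ Ioi 0) :
      HasSum (fun n : ℕ => (r n : ℂ) * rexp (-n * t)) (thetaSeries r t) := by
    simpa only [neg_mul, Complex.ofReal_mul, thetaSeries] using
      Complex.hasSum_ofReal.2 (h.summable t ht).hasSum
  rw [← (hasSum_mellin hpos (zero_lt_one.trans hs) hθ hsummable).tsum_eq, LSeries,
    ← tsum_mul_left]
  refine tsum_congr fun n => ?_
  rw [LSeries.term_def]
  split_ifs with hn
  · simp [hn, r.map_zero]
  · rw [Complex.ofReal_natCast, mul_div_assoc]

lemma LSeries_eq (h : IsThetaSequence r κ) {s : ℂ} (hs : 1 < s.re) :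
    LSeries (fun n => (r n : ℂ)) s =
      (mellin (regularTheta r κ) s + κ / (s - 1)) * (Complex.Gamma s)⁻¹ := by
  have hΓ : Complex.Gamma s ≠ 0 := Complex.Gamma_ne_zero_of_re_pos (zero_lt_one.trans hs)
  rw [← h.mellin_thetaSeries hs, h.mellin_thetaSeries_eq_Gamma_mul_LSeries hs, mul_comm,
    inv_mul_cancel_left₀ hΓ]

end IsThetaSequence

end MellinTransform

section EntireContinuation

open ArithmeticFunction

/-- Pointwise multiplication by `log`: the derivation of the ring of arithmetic functions that
corresponds to `-d/ds` on Dirichlet series. -/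
noncomputable def mulLog (f : ArithmeticFunction ℂ) : ArithmeticFunction ℂ :=
  ⟨LSeries.logMul f, by simp [LSeries.logMul]⟩

variable {f g : ArithmeticFunction ℂ}

lemma mulLog_apply (f : ArithmeticFunction ℂ) (n : ℕ) : mulLog f n = Real.log n * f n := by
  rw [Complex.natCast_log]
  rfl

lemma arithmeticFunction_sum_apply {ι : Type*} (s : Finset ι) (f : ι → ArithmeticFunction ℂ)
    (n : ℕ) : (∑ i ∈ s, f i) n = ∑ i ∈ s, f i n :=
  map_sum (⟨⟨fun f => f n, rfl⟩, fun _ _ => rfl⟩ : ArithmeticFunction ℂ →+ ℂ) f s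

lemma mulLog_mul (f g : ArithmeticFunction ℂ) : mulLog (f * g) = mulLog f * g + f * mulLog g := by
  ext n
  simp only [mulLog_apply, ArithmeticFunction.add_apply, mul_apply, Finset.mul_sum,
    ← Finset.sum_add_distrib]
  refine Finset.sum_congr rfl fun p hp => ?_
  obtain ⟨rfl, hn⟩ := Nat.mem_divisorsAntidiagonal.1 hp
  obtain ⟨h₁, h₂⟩ := mul_ne_zero_iff.1 hn
  rw [Nat.cast_mul, Real.log_mul (mod_cast h₁) (mod_cast h₂), Complex.ofReal_add]
  ring

lemma mulLog_prod {ι : Type*} (s : Finset ι) {f g : ι → ArithmeticFunction ℂ}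
    (h : ∀ i, mulLog (f i) = f i * g i) :
    mulLog (∏ i ∈ s, f i) = (∏ i ∈ s, f i) * ∑ i ∈ s, g i := by
  classical
  induction s using Finset.induction_on with
  | empty =>
    ext n
    rcases eq_or_ne n 1 with rfl | hn
    · simp [mulLog_apply]
    · simp [mulLog_apply, one_apply_ne hn]
  | insert i s hi ih =>
    rw [Finset.prod_insert hi, Finset.sum_insert hi, mulLog_mul, h, ih]
    ring

open scoped ComplexOrder in
lemma nonneg_of_mulLog_eq_mul (h : mulLog f = f * g) (hf : f 1 = 1) (hg : ∀ n, 0 ≤ g n)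
    (hg1 : g 1 = 0) (n : ℕ) : 0 ≤ f n := by
  induction n using Nat.strong_induction_on with
  | _ n ih =>
    rcases Nat.lt_or_ge n 2 with hn | hn
    · interval_cases n <;> simp [hf]
    · have hlog : 0 < (Real.log n : ℂ) := by
        exact_mod_cast Real.log_pos (by exact_mod_cast hn)
      rw [← inv_mul_cancel_left₀ hlog.ne' (f n), ← mulLog_apply, h, mul_apply]
      refine mul_nonneg (by exact_mod_cast (inv_pos.2 hlog).le) ?_
      refine Finset.sum_nonneg fun p hp => ?_
      obtain ⟨rfl, hn0⟩ := Nat.mem_divisorsAntidiagonal.1 hp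
      obtain ⟨h₁, h₂⟩ := mul_ne_zero_iff.1 hn0
      by_cases hp₂ : p.2 = 1
      · rw [hp₂, hg1, mul_zero]
      · exact mul_nonneg (ih _ (lt_mul_of_one_lt_right (by omega) (by omega))) (hg _)

/-- The Dirichlet series of `f` converges for `1 < Re s` and, multiplied by `(s - 1) ^ k`, continues
there to the entire function `E`. -/
structure HasEntireContinuation (f : ArithmeticFunction ℂ) (k : ℕ) (E : ℂ → ℂ) : Prop where
  lseriesSummable : ∀ s : ℂ, 1 < s.re → LSeriesSummable f s
  differentiable : Differentiable ℂ E
  eq : ∀ s : ℂ, 1 < s.re → LSeries f s * (s - 1) ^ k = E s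

namespace HasEntireContinuation

variable {k : ℕ} {E : ℂ → ℂ}

lemma one : HasEntireContinuation 1 0 1 where
  lseriesSummable s _ := by
    change LSeriesSummable (fun n => (1 : ArithmeticFunction ℂ) n) s
    rw [one_eq_delta]
    refine summable_of_ne_finset_zero (s := {1}) fun n hn => ?_
    rw [LSeries.term_delta, if_neg (by simpa using hn)]
  differentiable := differentiable_const 1
  eq s _ := by
    change LSeries (fun n => (1 : ArithmeticFunction ℂ) n) s * _ = _
    rw [one_eq_delta, LSeries_delta, pow_zero, mul_one]

lemma mul {l : ℕ} {F : ℂ → ℂ} (hf : HasEntireContinuation f k E)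
    (hg : HasEntireContinuation g l F) : HasEntireContinuation (f * g) (k + l) (E * F) where
  lseriesSummable s hs := LSeriesSummable_mul (hf.lseriesSummable s hs) (hg.lseriesSummable s hs)
  differentiable := hf.differentiable.mul hg.differentiable
  eq s hs := by
    rw [LSeries_mul' (hf.lseriesSummable s hs) (hg.lseriesSummable s hs), pow_add,
      mul_mul_mul_comm, hf.eq s hs, hg.eq s hs, Pi.mul_apply]

lemma prod {ι : Type*} (s : Finset ι) {f : ι → ArithmeticFunction ℂ} {k : ι → ℕ} {E : ι → ℂ → ℂ}
    (h : ∀ i, HasEntireContinuation (f i) (k i) (E i)) :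
    HasEntireContinuation (∏ i ∈ s, f i) (∑ i ∈ s, k i) (∏ i ∈ s, E i) := by
  classical
  induction s using Finset.induction_on with
  | empty => exact one
  | insert i s hi ih =>
    rw [Finset.prod_insert hi, Finset.prod_insert hi, Finset.sum_insert hi]
    exact (h i).mul ih

lemma abscissaOfAbsConv_le (h : HasEntireContinuation f k E) :
    LSeries.abscissaOfAbsConv f ≤ (1 : ℝ) :=
  LSeries.abscissaOfAbsConv_le_of_forall_lt_LSeriesSummable fun y hy =>
    h.lseriesSummable y (by simpa using hy)

-- If `E 1 = 0`, the Dirichlet series of `f` is entire, hence positive at `0` by Landau's theorem.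
open scoped ComplexOrder in
lemma apply_one_ne_zero (h : HasEntireContinuation f 1 E) (hf : ∀ n, 0 ≤ f n) (hf1 : f 1 = 1)
    (hE : E 0 = 0) : E 1 ≠ 0 := by
  intro hE1
  have hdiff : Differentiable ℂ (dslope E 1) := by
    rw [← differentiableOn_univ, Complex.differentiableOn_dslope univ_mem]
    exact h.differentiable.differentiableOn
  have heq : Set.EqOn (dslope E 1) (LSeries f) {s | (1 : ℝ) < s.re} := fun s (hs : 1 < s.re) => by
    have hs1 : s ≠ 1 := fun h1 => hs.ne' (by rw [h1, Complex.one_re])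
    rw [dslope_of_ne _ hs1, slope_def_field, hE1, sub_zero, ← h.eq s hs, pow_one,
      mul_div_cancel_right₀ _ (sub_ne_zero.2 hs1)]
  have hpos := LSeries.positive_of_differentiable_of_eqOn (a := f) hf (by simp [hf1]) hdiff
    h.abscissaOfAbsConv_le heq 0
  rw [Complex.ofReal_zero, dslope_of_ne _ zero_ne_one, slope_def_field, hE, hE1, sub_zero,
    zero_div] at hpos
  exact lt_irrefl _ hpos

lemma sub_one_mul_logDeriv (h : HasEntireContinuation f k E) {s : ℂ} (hs : 1 < s.re)
    (hE : E s ≠ 0) :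
    (s - 1) * logDeriv E s = k - (s - 1) * (LSeries (mulLog f) s / LSeries f s) := by
  have hs1 : s - 1 ≠ 0 := sub_ne_zero.2 fun h1 => hs.ne' (by rw [h1, Complex.one_re])
  have hderiv : HasDerivAt (LSeries f) (-LSeries (mulLog f) s) s :=
    LSeries_hasDerivAt (h.abscissaOfAbsConv_le.trans_lt (by exact_mod_cast hs))
  have hE_nhds : E =ᶠ[𝓝 s] fun z => LSeries f z * (z - 1) ^ k := by
    filter_upwards [(isOpen_lt continuous_const Complex.continuous_re).mem_nhds hs] with z hz
    exact (h.eq z hz).symm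
  have hpow : DifferentiableAt ℂ (fun z : ℂ => z - 1) s := by fun_prop
  rw [← h.eq s hs] at hE
  rw [(logDeriv_congr_nhds hE_nhds).eq_of_nhds, logDeriv_mul s (left_ne_zero_of_mul hE)
    (right_ne_zero_of_mul hE) hderiv.differentiableAt (hpow.fun_pow k), logDeriv_fun_pow hpow,
    logDeriv_apply, logDeriv_apply, hderiv.deriv, deriv_sub_const, deriv_id'']
  field_simp
  ring

lemma tendsto_sub_one_mul_LSeries (h : HasEntireContinuation f k E) (hE : E 1 ≠ 0)
    (hg : ∀ s : ℂ, 1 < s.re → LSeriesSummable g s) (hfg : mulLog f = f * g) :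
    Tendsto (fun x : ℝ => ((x : ℂ) - 1) * LSeries g x) (𝓝[>] 1) (𝓝 k) := by
  have hcoe : Tendsto (fun x : ℝ => (x : ℂ)) (𝓝[>] 1) (𝓝 1) :=
    (Complex.continuous_ofReal.tendsto' 1 1 Complex.ofReal_one).mono_left nhdsWithin_le_nhds
  have hlogDeriv : ContinuousAt (fun s : ℂ => k - (s - 1) * logDeriv E s) 1 := by
    have hderiv : Continuous (deriv E) := h.differentiable.contDiff.continuous_deriv le_top
    refine continuousAt_const.sub (ContinuousAt.mul (by fun_prop) ?_)
    exact hderiv.continuousAt.div h.differentiable.continuous.continuousAt hE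
  have hlim := hlogDeriv.tendsto.comp hcoe
  rw [sub_self, zero_mul, sub_zero] at hlim
  refine hlim.congr' ?_
  filter_upwards [(h.differentiable.continuous.continuousAt.tendsto.comp hcoe).eventually_ne hE,
    self_mem_nhdsWithin] with x hEx hx
  have hre : 1 < (x : ℂ).re := hx
  have hL : LSeries f x ≠ 0 := fun h0 => hEx (by simp [← h.eq x hre, h0])
  simp only [Function.comp_apply]
  rw [h.sub_one_mul_logDeriv hre hEx, hfg, LSeries_mul' (h.lseriesSummable x hre) (hg x hre),
    mul_div_cancel_left₀ _ hL, sub_sub_cancel]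

open scoped ComplexOrder in
lemma apply_one_ne_zero_of_sum_eq_one {ι : Type*} [Fintype ι] {f g : ι → ArithmeticFunction ℂ}
    {k : ι → ℕ} {E : ι → ℂ → ℂ} (h : ∀ i, HasEntireContinuation (f i) (k i) (E i))
    (hfg : ∀ i, mulLog (f i) = f i * g i) (hf : ∀ i, f i 1 = 1) (hg : ∀ n, 0 ≤ ∑ i, g i n)
    (hg1 : ∑ i, g i 1 = 0) (hk : ∑ i, k i = 1) {j : ι} (hj : E j 0 = 0) (i : ι) : E i 1 ≠ 0 := by
  have hprod := HasEntireContinuation.prod Finset.univ h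
  have hprod1 : (∏ i, f i) 1 = 1 :=
    Finset.prod_induction f (fun F => F 1 = 1) (fun F₁ F₂ h₁ h₂ => by simp [h₁, h₂]) (by simp)
      fun i _ => hf i
  have hnonneg : ∀ n, 0 ≤ (∏ i, f i) n := by
    refine nonneg_of_mulLog_eq_mul (mulLog_prod _ hfg) hprod1 (fun n => ?_) ?_
    · rw [arithmeticFunction_sum_apply]
      exact hg n
    · rw [arithmeticFunction_sum_apply, hg1]
  rw [hk] at hprod
  have hne := hprod.apply_one_ne_zero hnonneg hprod1 (by
    rw [Finset.prod_apply, Finset.prod_eq_zero (Finset.mem_univ j) hj])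
  rw [Finset.prod_apply, Finset.prod_ne_zero_iff] at hne
  exact hne i (Finset.mem_univ i)

end HasEntireContinuation

end EntireContinuation

section VonMangoldtBound

open ArithmeticFunction

variable {l : ℕ → ℂ} {K : ℝ}

lemma lseriesSummable_of_norm_le_vonMangoldt (hl : ∀ n, ‖l n‖ ≤ K * Λ n) {s : ℂ}
    (hs : 1 < s.re) : LSeriesSummable l s := by
  refine Summable.of_norm_bounded ((LSeriesSummable_vonMangoldt hs).norm.mul_left K) fun n => ?_
  rcases eq_or_ne n 0 with rfl | hn
  · simp
  · rw [LSeries.term_of_ne_zero hn, LSeries.term_of_ne_zero hn, norm_div, norm_div,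
      ← mul_div_assoc, Complex.norm_real, Real.norm_of_nonneg vonMangoldt_nonneg]
    gcongr
    exact hl n

lemma summable_vonMangoldt_not_prime_div :
    Summable fun n : ℕ => (if n.Prime then 0 else Λ n) / n := by
  refine (vonMangoldt.summable_residueClass_non_primes_div (q := 1) (a := 1)).congr fun n => ?_
  congr 2
  simp [vonMangoldt.residueClass, Subsingleton.elim ((n : ZMod 1)) 1]

lemma norm_LSeries_le_of_prime_eq_zero (hl : ∀ n, ‖l n‖ ≤ K * Λ n)
    (hprime : ∀ p : ℕ, p.Prime → l p = 0) {x : ℝ} (hx : 1 < x) :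
    ‖LSeries l x‖ ≤ ∑' n : ℕ, K * ((if n.Prime then 0 else Λ n) / n) := by
  refine tsum_of_norm_bounded (summable_vonMangoldt_not_prime_div.mul_left K).hasSum fun n => ?_
  rcases n.eq_zero_or_pos with rfl | hn
  · simp
  rw [LSeries.term_of_ne_zero hn.ne', norm_div, ← mul_div_assoc]
  split_ifs with hp
  · simp [hprime n hp]
  · have hpow : (n : ℝ) ≤ ‖(n : ℂ) ^ (x : ℂ)‖ := by
      rw [Complex.norm_natCast_cpow_of_pos hn, Complex.ofReal_re]
      exact Real.self_le_rpow_of_one_le (by exact_mod_cast hn) hx.le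
    have hl0 : 0 ≤ K * Λ n := (norm_nonneg _).trans (hl n)
    gcongr
    exact hl n

lemma exists_prime_apply_ne_zero_of_tendsto {c : ℂ} (hl : ∀ n, ‖l n‖ ≤ K * Λ n) (hc : c ≠ 0)
    (hlim : Tendsto (fun x : ℝ => ((x : ℂ) - 1) * LSeries l x) (𝓝[>] 1) (𝓝 c)) :
    ∃ p : ℕ, p.Prime ∧ l p ≠ 0 := by
  by_contra! hprime
  refine hc (tendsto_nhds_unique hlim ?_)
  have hsub : Tendsto (fun x : ℝ => (x : ℂ) - 1) (𝓝[>] 1) (𝓝 0) := by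
    refine (Continuous.tendsto' ?_ 1 0 (by simp)).mono_left nhdsWithin_le_nhds
    fun_prop
  refine hsub.zero_mul_isBoundedUnder_le (isBoundedUnder_of_eventually_le
    (a := ∑' n : ℕ, K * ((if n.Prime then 0 else Λ n) / n)) ?_)
  filter_upwards [self_mem_nhdsWithin] with x hx
  exact norm_LSeries_le_of_prime_eq_zero hl hprime hx

end VonMangoldtBound

section Twist

open ArithmeticFunction

variable {G : Type*} [CommGroup G]

lemma sum_mulChar_apply_eq_zero [Finite G] [Fintype (MulChar G ℂ)] {a : G} (ha : a ≠ 1) :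
    ∑ χ : MulChar G ℂ, χ a = 0 := by
  obtain ⟨ψ, hψ⟩ := MulChar.exists_apply_ne_one_of_hasEnoughRootsOfUnity G ℂ ha
  refine eq_zero_of_mul_eq_self_left hψ ?_
  rw [Finset.mul_sum]
  exact Equiv.sum_comp (Equiv.mulLeft ψ) fun χ : MulChar G ℂ => χ a

variable [Fintype G]

/-- The combination of the sequences `r A` weighted by the values of the character `χ`. -/
noncomputable def twist (r : G → ArithmeticFunction ℝ) (χ : MulChar G ℂ) : ArithmeticFunction ℂ :=
  ⟨fun n => ∑ A, χ A * r A n, by simp⟩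

variable {r l : G → ArithmeticFunction ℝ} {χ : MulChar G ℂ}

lemma twist_eq_sum_smul (r : G → ArithmeticFunction ℝ) (χ : MulChar G ℂ) :
    ⇑(twist r χ) = ∑ A, χ A • fun n => (r A n : ℂ) := by
  ext n
  simp [twist]

lemma lseriesSummable_twist {s : ℂ} (h : ∀ A, LSeriesSummable (fun n => (r A n : ℂ)) s) :
    LSeriesSummable (twist r χ) s := by
  rw [twist_eq_sum_smul]
  exact LSeriesSummable.sum fun A _ => (h A).smul _

lemma LSeries_twist {s : ℂ} (h : ∀ A, LSeriesSummable (fun n => (r A n : ℂ)) s) :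
    LSeries (twist r χ) s = ∑ A, χ A * LSeries (fun n => (r A n : ℂ)) s := by
  rw [twist_eq_sum_smul, LSeries_sum fun A _ => (h A).smul _]
  simp only [LSeries_smul]

lemma sum_inv_mul_twist [Fintype (MulChar G ℂ)] (r : G → ArithmeticFunction ℝ) (A : G) (n : ℕ) :
    ∑ χ : MulChar G ℂ, χ A⁻¹ * twist r χ n = Fintype.card (MulChar G ℂ) * r A n := by
  classical
  have horth (B : G) : ∑ χ : MulChar G ℂ, χ A⁻¹ * χ B =
      if B = A then (Fintype.card (MulChar G ℂ) : ℂ) else 0 := by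
    simp_rw [← map_mul]
    split_ifs with hBA
    · simp [hBA]
    · exact sum_mulChar_apply_eq_zero fun h => hBA (inv_mul_eq_one.1 h).symm
  simp only [twist, coe_mk, Finset.mul_sum]
  rw [Finset.sum_comm]
  simp_rw [← mul_assoc, ← Finset.sum_mul, horth]
  simp

lemma sum_inv_mul_LSeries_twist [Fintype (MulChar G ℂ)] {s : ℂ}
    (h : ∀ A, LSeriesSummable (fun n => (r A n : ℂ)) s) (A : G) :
    ∑ χ : MulChar G ℂ, χ A⁻¹ * LSeries (twist r χ) s =
      Fintype.card (MulChar G ℂ) * LSeries (fun n => (r A n : ℂ)) s := by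
  rw [← LSeries_smul]
  simp_rw [← LSeries_smul]
  rw [← LSeries_sum fun χ _ => (lseriesSummable_twist h).smul _]
  congr 1
  ext n
  simpa only [Finset.sum_apply, Pi.smul_apply, smul_eq_mul] using sum_inv_mul_twist r A n

lemma exists_hasEntireContinuation_twist [DecidableEq (MulChar G ℂ)] {κ : ℝ}
    (hr : ∀ A, IsThetaSequence (r A) κ) (χ : MulChar G ℂ) :
    ∃ E : ℂ → ℂ, HasEntireContinuation (twist r χ) (if χ = 1 then 1 else 0) E ∧ E 0 = 0 := by
  have hsummable (s : ℂ) (hs : 1 < s.re) (A : G) := (hr A).lseriesSummable hs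
  refine ⟨fun s => ((s - 1) ^ (if χ = 1 then 1 else 0) *
    ∑ A, χ A * mellin (regularTheta (r A) κ) s + κ * ∑ A, χ A) * (Complex.Gamma s)⁻¹,
    ⟨fun s hs => lseriesSummable_twist (hsummable s hs), ?_, fun s hs => ?_⟩, by simp⟩
  · have hmellin (A : G) := (hr A).differentiable_mellin
    have hΓ := Complex.differentiable_one_div_Gamma
    fun_prop
  · have hs1 : s - 1 ≠ 0 := sub_ne_zero.2 fun h => hs.ne' (by rw [h, Complex.one_re])
    rw [LSeries_twist (hsummable s hs)]
    simp only [(hr _).LSeries_eq hs, ← mul_assoc, ← Finset.sum_mul, mul_add,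
      Finset.sum_add_distrib]
    split_ifs with hχ
    · field_simp
    · rw [MulChar.sum_eq_zero_of_ne_one hχ]
      ring

lemma tendsto_sub_one_mul_LSeries_of_twist [Fintype (MulChar G ℂ)] [DecidableEq (MulChar G ℂ)]
    (hl : ∀ {s : ℂ}, 1 < s.re → ∀ A, LSeriesSummable (fun n => (l A n : ℂ)) s)
    (hlim : ∀ χ : MulChar G ℂ, Tendsto (fun x : ℝ => ((x : ℂ) - 1) * LSeries (twist l χ) x)
      (𝓝[>] 1) (𝓝 ((if χ = 1 then 1 else 0 : ℕ) : ℂ))) (A : G) :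
    Tendsto (fun x : ℝ => ((x : ℂ) - 1) * LSeries (fun n => (l A n : ℂ)) x) (𝓝[>] 1)
      (𝓝 (Fintype.card (MulChar G ℂ) : ℂ)⁻¹) := by
  have hcard : (Fintype.card (MulChar G ℂ) : ℂ) ≠ 0 := Nat.cast_ne_zero.2 Fintype.card_ne_zero
  have hsum := (tendsto_finsetSum Finset.univ fun χ (_ : χ ∈ Finset.univ) =>
    (hlim χ).const_mul (χ A⁻¹)).const_mul (Fintype.card (MulChar G ℂ) : ℂ)⁻¹
  have hsum1 : ∑ χ : MulChar G ℂ, χ A⁻¹ * ((if χ = 1 then 1 else 0 : ℕ) : ℂ) = 1 := by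
    simp [MulChar.one_apply (Group.isUnit A)]
  rw [hsum1, mul_one] at hsum
  refine hsum.congr' ?_
  filter_upwards [self_mem_nhdsWithin] with x hx
  simp_rw [mul_left_comm _ ((x : ℂ) - 1)]
  rw [← Finset.mul_sum, sum_inv_mul_LSeries_twist (hl (by exact hx)), mul_left_comm,
    inv_mul_cancel_left₀ hcard]

open scoped ComplexOrder in
theorem exists_prime_apply_ne_zero_of_mulLog_twist {κ K : ℝ} (hr : ∀ A, IsThetaSequence (r A) κ)
    (hr1 : ∀ χ, twist r χ 1 = 1) (hl : ∀ A n, 0 ≤ l A n) (hlK : ∀ A n, l A n ≤ K * Λ n)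
    (hrl : ∀ χ, mulLog (twist r χ) = twist r χ * twist l χ) (A : G) :
    ∃ p : ℕ, p.Prime ∧ l A p ≠ 0 := by
  classical
  let _ : Fintype (MulChar G ℂ) := Fintype.ofFinite _
  choose E hE hE0 using exists_hasEntireContinuation_twist hr
  have hnorm (A : G) (n : ℕ) : ‖(l A n : ℂ)‖ ≤ K * Λ n := by
    rw [Complex.norm_real, Real.norm_of_nonneg (hl A n)]
    exact hlK A n
  have hlsum {s : ℂ} (hs : 1 < s.re) (A : G) :=
    lseriesSummable_of_norm_le_vonMangoldt (hnorm A) hs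
  have hsum (n : ℕ) : ∑ χ, twist l χ n = Fintype.card (MulChar G ℂ) * l 1 n := by
    rw [← sum_inv_mul_twist l 1]
    simp
  have hE1 : ∀ χ, E χ 1 ≠ 0 := by
    refine HasEntireContinuation.apply_one_ne_zero_of_sum_eq_one hE hrl hr1 (fun n => ?_) ?_
      (by simp) (hE0 1)
    · rw [hsum]
      exact mul_nonneg (Nat.cast_nonneg _) (by exact_mod_cast hl 1 n)
    · rw [hsum, le_antisymm (by simpa using hlK 1 1) (hl 1 1)]
      simp
  have hlim := tendsto_sub_one_mul_LSeries_of_twist hlsum (fun χ =>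
    (hE χ).tendsto_sub_one_mul_LSeries (hE1 χ) (fun s hs => lseriesSummable_twist (hlsum hs))
      (hrl χ)) A
  obtain ⟨p, hp, hlp⟩ := exists_prime_apply_ne_zero_of_tendsto (hnorm A)
    (inv_ne_zero (Nat.cast_ne_zero.2 Fintype.card_ne_zero)) hlim
  exact ⟨p, hp, by exact_mod_cast hlp⟩

end Twist

section IdealVonMangoldt

open ArithmeticFunction

variable {O : Type*} [CommRing O] [IsDedekindDomain O]

lemma radical_pow_of_prime {P : Ideal O}
    (hP : Prime P) {k : ℕ} (hk : 0 < k) : (P ^ k).radical = P := by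
  rw [Ideal.radical_pow P hk.ne', (Ideal.isPrime_of_prime hP).radical]

lemma eq_pow_multiplicity_succ_of_isPrimePow {P I J : Ideal O} (hP : Prime P) (hI : I ≠ 0)
    (hJ : IsPrimePow J) (hJPI : J ∣ P * I) (hJI : ¬J ∣ I) : J = P ^ (multiplicity P I + 1) := by
  obtain ⟨Q, k, hQ, -, rfl⟩ := hJ
  have hPI : FiniteMultiplicity P I := .of_prime_left hP hI
  by_cases hQP : Q ∣ P
  · obtain rfl := associated_iff_eq.1 (hQ.associated_of_dvd hP hQP)
    congr 1
    refine le_antisymm ?_ ?_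
    · by_contra! hk
      have hdvd := (pow_dvd_pow Q hk).trans hJPI
      rw [Nat.succ_eq_add_one, pow_succ', mul_dvd_mul_iff_left hP.ne_zero] at hdvd
      exact hPI.not_pow_dvd_of_multiplicity_lt (Nat.lt_succ_self _) hdvd
    · by_contra! hk
      exact hJI (pow_dvd_of_le_multiplicity (Nat.lt_succ_iff.1 hk))
  · exact absurd (hQ.pow_dvd_of_dvd_mul_left k hQP hJPI) hJI

variable [Module.Free ℤ O]

open Classical in
/-- The von Mangoldt function on ideals: `log N(P)` at the powers of a prime `P`, which is recovered
as the radical, and `0` elsewhere. -/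
noncomputable def idealVonMangoldt (I : Ideal O) : ℝ :=
  if IsPrimePow I then Real.log (Ideal.absNorm I.radical) else 0

lemma idealVonMangoldt_nonneg (I : Ideal O) : 0 ≤ idealVonMangoldt I := by
  unfold idealVonMangoldt
  split_ifs
  exacts [Real.log_natCast_nonneg _, le_rfl]

lemma idealVonMangoldt_pow {P : Ideal O} (hP : Prime P) {k : ℕ} (hk : 0 < k) :
    idealVonMangoldt (P ^ k) = Real.log (Ideal.absNorm P) := by
  rw [idealVonMangoldt, if_pos (hP.isPrimePow.pow hk.ne'), radical_pow_of_prime hP hk]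

lemma sum_idealVonMangoldt_of_mem_iff_dvd [Module.Finite ℤ O] {I : Ideal O} (hI : I ≠ 0)
    {S : Finset (Ideal O)} (hS : ∀ J, J ∈ S ↔ J ∣ I) :
    ∑ J ∈ S, idealVonMangoldt J = Real.log (Ideal.absNorm I) := by
  classical
  induction I using UniqueFactorizationMonoid.induction_on_prime generalizing S with
  | h₁ => exact absurd rfl hI
  | h₂ I hunit =>
    obtain rfl := isUnit_iff_eq_one.1 hunit
    rw [map_one, Nat.cast_one, Real.log_one]
    refine Finset.sum_eq_zero fun J hJ => if_neg fun hpow => ?_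
    exact hpow.ne_one (isUnit_iff_eq_one.1 (isUnit_of_dvd_one ((hS J).1 hJ)))
  | h₃ I P hI0 hP ih =>
    have hIfin : FiniteMultiplicity P I := .of_prime_left hP hI0
    rw [← Finset.sum_filter_add_sum_filter_not S (· ∣ I), ih hI0 (S := {J ∈ S | J ∣ I}) fun J => ?_,
      Finset.sum_eq_single_of_mem (P ^ (multiplicity P I + 1)), idealVonMangoldt_pow hP (by omega),
      map_mul, Nat.cast_mul, Real.log_mul, add_comm]
    · exact Nat.cast_ne_zero.2 (Ideal.absNorm_eq_zero_iff.not.2 hP.ne_zero)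
    · exact Nat.cast_ne_zero.2 (Ideal.absNorm_eq_zero_iff.not.2 hI0)
    · rw [Finset.mem_filter, hS, pow_succ']
      refine ⟨mul_dvd_mul_left P (pow_multiplicity_dvd P I), fun hdvd => ?_⟩
      exact hIfin.not_pow_dvd_of_multiplicity_lt (Nat.lt_succ_self _) (pow_succ' P _ ▸ hdvd)
    · intro J hJ hne
      rw [Finset.mem_filter, hS] at hJ
      exact if_neg fun hpow =>
        hne (eq_pow_multiplicity_succ_of_isPrimePow hP hI0 hpow hJ.1 hJ.2)
    · rw [Finset.mem_filter, hS, and_iff_right_iff_imp]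
      exact fun hJ => hJ.mul_left P

variable [Module.Finite ℤ O]

lemma vonMangoldt_absNorm_of_isPrimePow {I : Ideal O} (hI : IsPrimePow I) :
    ((Ideal.absNorm I).minFac : O) ∈ I.radical ∧ (Ideal.absNorm I).minFac.Prime ∧
      Λ (Ideal.absNorm I) = Real.log (Ideal.absNorm I).minFac := by
  obtain ⟨P, k, hP, hk, rfl⟩ := hI
  have hmax := (Ideal.isPrime_of_prime hP).isMaximal hP.ne_zero
  obtain ⟨p, m, hm, hpP, hp, hnorm⟩ := Ideal.exists_prime_and_absNorm_eq_pow P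
  have hmin : (Ideal.absNorm (P ^ k)).minFac = p := by
    rw [map_pow, hnorm, ← pow_mul, hp.pow_minFac (by positivity)]
  rw [hmin, radical_pow_of_prime hP hk, map_pow, hnorm, ← pow_mul,
    vonMangoldt_apply_pow (by positivity), vonMangoldt_apply_prime hp]
  exact ⟨hpP, hp, rfl⟩

lemma radical_injOn_isPrimePow (n : ℕ) :
    Set.InjOn Ideal.radical {I : Ideal O | IsPrimePow I ∧ Ideal.absNorm I = n} := by
  rintro _ ⟨⟨P, j, hP, hj, rfl⟩, hPn⟩ _ ⟨⟨Q, k, hQ, hk, rfl⟩, hQn⟩ hPQ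
  rw [radical_pow_of_prime hP hj, radical_pow_of_prime hQ hk] at hPQ
  subst hPQ
  have hnorm : 1 < Ideal.absNorm P := by
    have h0 : Ideal.absNorm P ≠ 0 := Ideal.absNorm_eq_zero_iff.not.2 hP.ne_zero
    have h1 : Ideal.absNorm P ≠ 1 := fun h =>
      hP.not_isUnit (Ideal.isUnit_iff.2 (Ideal.absNorm_eq_one_iff.1 h))
    omega
  have hjk := hPn.trans hQn.symm
  rw [map_pow, map_pow] at hjk
  rw [Nat.pow_right_injective hnorm hjk]

-- The primes in question are distinct divisors of the ideal `(p)`, of norm `p ^ rank`.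
lemma sum_idealVonMangoldt_le {n : ℕ} {S : Finset (Ideal O)}
    (hS : ∀ I ∈ S, Ideal.absNorm I = n) :
    ∑ I ∈ S, idealVonMangoldt I ≤ Module.finrank ℤ O * Λ n := by
  classical
  set T := {I ∈ S | IsPrimePow I} with hT
  have hTS (I : Ideal O) (hI : I ∈ T) : IsPrimePow I ∧ Ideal.absNorm I = n :=
    ⟨(Finset.mem_filter.1 hI).2, hS I (Finset.mem_filter.1 hI).1⟩
  have hsum : ∑ I ∈ S, idealVonMangoldt I = ∑ I ∈ T, Real.log (Ideal.absNorm I.radical) := by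
    simp only [hT, Finset.sum_filter, idealVonMangoldt]
  rw [hsum]
  rcases T.eq_empty_or_nonempty with hempty | ⟨I₀, hI₀⟩
  · rw [hempty, Finset.sum_empty]
    exact mul_nonneg (Nat.cast_nonneg _) vonMangoldt_nonneg
  obtain ⟨-, hp, hΛ⟩ := vonMangoldt_absNorm_of_isPrimePow (hTS I₀ hI₀).1
  rw [(hTS I₀ hI₀).2] at hp hΛ
  have hprime (I : Ideal O) (hI : I ∈ T) : Prime I.radical := by
    obtain ⟨P, k, hP, hk, rfl⟩ := (hTS I hI).1
    rwa [radical_pow_of_prime hP hk]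
  have hdvd : ∏ P ∈ T.image Ideal.radical, P ∣ Ideal.span {(n.minFac : O)} := by
    refine Finset.prod_primes_dvd _ (Finset.forall_mem_image.2 hprime)
      (Finset.forall_mem_image.2 fun I hI => ?_)
    rw [Ideal.dvd_span_singleton, ← (hTS I hI).2]
    exact (vonMangoldt_absNorm_of_isPrimePow (hTS I hI).1).1
  rw [Finset.prod_image ((radical_injOn_isPrimePow n).mono hTS)] at hdvd
  have hnorm : ∏ I ∈ T, Ideal.absNorm I.radical ∣ n.minFac ^ Module.finrank ℤ O := by
    simpa only [map_prod, Ideal.absNorm_span_natCast] using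
      Ideal.absNorm_dvd_absNorm_of_le (Ideal.dvd_iff_le.1 hdvd)
  have hne (I : Ideal O) (hI : I ∈ T) : Ideal.absNorm I.radical ≠ 0 :=
    Ideal.absNorm_eq_zero_iff.not.2 (hprime I hI).ne_zero
  rw [hΛ, ← Real.log_prod fun I hI => Nat.cast_ne_zero.2 (hne I hI), ← Real.log_pow]
  refine Real.log_le_log ?_ ?_
  · exact_mod_cast Finset.prod_pos fun I hI => Nat.pos_of_ne_zero (hne I hI)
  · exact_mod_cast Nat.le_of_dvd (pow_pos hp.pos _) hnorm

end IdealVonMangoldt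

section NormSum

open ArithmeticFunction

variable {O : Type*} [CommRing O] [IsDedekindDomain O] [Module.Free ℤ O] [Module.Finite ℤ O]
  [CharZero O]

lemma finite_setOf_absNorm_eq (n : ℕ) : {I : Ideal O | I ≠ 0 ∧ Ideal.absNorm I = n}.Finite :=
  (Ideal.finite_setOfPred_absNorm_eq n).subset fun _ hI => hI.2

variable (O) in
/-- The finite set of nonzero ideals of norm `n`. -/
noncomputable def idealsOfNorm (n : ℕ) : Finset (Ideal O) := (finite_setOf_absNorm_eq n).toFinset

lemma mem_idealsOfNorm {n : ℕ} {I : Ideal O} : I ∈ idealsOfNorm O n ↔ I ≠ 0 ∧ Ideal.absNorm I = n :=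
  Set.Finite.mem_toFinset _

lemma idealsOfNorm_zero : idealsOfNorm O 0 = ∅ :=
  Finset.eq_empty_of_forall_notMem fun I hI => by
    rw [mem_idealsOfNorm, Ideal.absNorm_eq_zero_iff] at hI
    exact hI.1 hI.2

lemma idealsOfNorm_one : idealsOfNorm O 1 = {1} := by
  ext I
  rw [mem_idealsOfNorm, Ideal.absNorm_eq_one_iff, Finset.mem_singleton, Ideal.one_eq_top,
    and_iff_right_iff_imp]
  rintro rfl
  exact top_ne_bot

/-- The coefficients of the Dirichlet series `∑ h(I) N(I)^{-s}` over the nonzero ideals `I`. -/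
noncomputable def normSum {R : Type*} [AddCommMonoid R] (h : Ideal O → R) : ArithmeticFunction R :=
  ⟨fun n => ∑ I ∈ idealsOfNorm O n, h I, by rw [idealsOfNorm_zero, Finset.sum_empty]⟩

lemma normSum_apply {R : Type*} [AddCommMonoid R] (h : Ideal O → R) (n : ℕ) :
    normSum h n = ∑ I ∈ idealsOfNorm O n, h I := rfl

open Classical in
/-- The divisors of an ideal `I`, with the junk value `∅` at `I = 0`. -/
noncomputable def idealDivisors (I : Ideal O) : Finset (Ideal O) :=
  {J ∈ (Ideal.absNorm I).divisors.biUnion (idealsOfNorm O) | J ∣ I}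

lemma mem_idealDivisors {I J : Ideal O} (hI : I ≠ 0) : J ∈ idealDivisors I ↔ J ∣ I := by
  classical
  rw [idealDivisors, Finset.mem_filter, and_iff_right_iff_imp]
  refine fun hJ => Finset.mem_biUnion.2 ⟨Ideal.absNorm J, ?_, ?_⟩
  · exact Nat.mem_divisors.2 ⟨map_dvd Ideal.absNorm hJ, Ideal.absNorm_eq_zero_iff.not.2 hI⟩
  · exact mem_idealsOfNorm.2 ⟨ne_zero_of_dvd_ne_zero hI hJ, rfl⟩

lemma normSum_mul_normSum_apply (w : Ideal O →* ℂ) (h : Ideal O → ℂ) (n : ℕ) :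
    (normSum w * normSum fun I => w I * h I) n =
      ∑ I ∈ idealsOfNorm O n, w I * ∑ J ∈ idealDivisors I, h J := by
  simp only [mul_apply, normSum_apply, Finset.sum_mul_sum, ← Finset.sum_product']
  simp only [Finset.mul_sum, Finset.sum_sigma']
  refine Finset.sum_bij (fun x _ => ⟨x.2.1 * x.2.2, x.2.2⟩) ?_ ?_ ?_ ?_
  · rintro ⟨⟨d, e⟩, J, L⟩ hx
    simp only [Finset.mem_sigma, Nat.mem_divisorsAntidiagonal, Finset.mem_product,
      mem_idealsOfNorm] at hx ⊢
    obtain ⟨⟨hde, -⟩, ⟨hJ, rfl⟩, hL, rfl⟩ := hx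
    exact ⟨⟨mul_ne_zero hJ hL, by rw [map_mul, hde]⟩,
      (mem_idealDivisors (mul_ne_zero hJ hL)).2 (dvd_mul_left L J)⟩
  · rintro ⟨⟨d, e⟩, J, L⟩ hx ⟨⟨d', e'⟩, J', L'⟩ hx' heq
    simp only [Finset.mem_sigma, Finset.mem_product, mem_idealsOfNorm] at hx hx'
    obtain ⟨-, ⟨-, rfl⟩, hL, rfl⟩ := hx
    obtain ⟨-, ⟨-, rfl⟩, -, rfl⟩ := hx'
    obtain ⟨hJL, hLL⟩ := Sigma.mk.inj_iff.1 heq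
    obtain rfl := eq_of_heq hLL
    obtain rfl : J = J' := mul_right_cancel₀ hL hJL
    rfl
  · rintro ⟨I, L⟩ hx
    obtain ⟨hI, hL⟩ := Finset.mem_sigma.1 hx
    obtain ⟨hI0, rfl⟩ := mem_idealsOfNorm.1 hI
    obtain ⟨J, hJ⟩ := (mem_idealDivisors hI0).1 hL
    dsimp only at hJ
    rw [mul_comm] at hJ
    subst hJ
    refine ⟨⟨(Ideal.absNorm J, Ideal.absNorm L), J, L⟩, ?_, rfl⟩
    simp only [Finset.mem_sigma, Nat.mem_divisorsAntidiagonal, Finset.mem_product,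
      mem_idealsOfNorm, and_true]
    exact ⟨⟨(map_mul _ _ _).symm, Ideal.absNorm_eq_zero_iff.not.2 hI0⟩,
      left_ne_zero_of_mul hI0, right_ne_zero_of_mul hI0⟩
  · rintro ⟨⟨d, e⟩, J, L⟩ -
    dsimp only
    rw [map_mul, mul_assoc]

lemma mulLog_normSum (w : Ideal O →* ℂ) :
    mulLog (normSum w) = normSum w * normSum fun I => w I * idealVonMangoldt I := by
  ext n
  rw [normSum_mul_normSum_apply, mulLog_apply, normSum_apply, Finset.mul_sum]
  refine Finset.sum_congr rfl fun I hI => ?_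
  obtain ⟨hI0, rfl⟩ := mem_idealsOfNorm.1 hI
  rw [← Complex.ofReal_sum, sum_idealVonMangoldt_of_mem_iff_dvd hI0 fun J => mem_idealDivisors hI0,
    mul_comm]

lemma hasSum_normSum_indicator {𝒜 : Set (Ideal O)} (h𝒜 : ⊥ ∉ 𝒜) {t : ℝ}
    (hsum : Summable fun I : 𝒜 => rexp (-(Ideal.absNorm I.1 * t))) :
    HasSum (fun n : ℕ => normSum (𝒜.indicator (1 : Ideal O → ℝ)) n * rexp (-(n * t)))
      (∑' I : 𝒜, rexp (-(Ideal.absNorm I.1 * t))) := by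
  have hfiber := (hasSum_subtype_iff_indicator
    (f := fun I : Ideal O => rexp (-(Ideal.absNorm I * t)))).1 hsum.hasSum
    |>.tsum_fiberwise Ideal.absNorm
  refine (congrArg (HasSum · _) (funext fun n => ?_)).mpr hfiber
  rw [tsum_subtype (Ideal.absNorm ⁻¹' {n}), tsum_eq_sum (s := idealsOfNorm O n), normSum_apply,
    Finset.sum_mul]
  · refine Finset.sum_congr rfl fun I hI => ?_
    obtain ⟨-, rfl⟩ := mem_idealsOfNorm.1 hI
    rw [Set.indicator_of_mem (show I ∈ Ideal.absNorm ⁻¹' {Ideal.absNorm I} from rfl)]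
    by_cases hI𝒜 : I ∈ 𝒜
    · rw [Set.indicator_of_mem hI𝒜, Set.indicator_of_mem hI𝒜, Pi.one_apply, one_mul]
    · rw [Set.indicator_of_notMem hI𝒜, Set.indicator_of_notMem hI𝒜, zero_mul]
  · intro I hI
    by_cases hIn : I ∈ (Ideal.absNorm ⁻¹' {n} : Set (Ideal O))
    · have hI0 : I = ⊥ := not_not.1 fun hI0 => hI (mem_idealsOfNorm.2 ⟨hI0, hIn⟩)
      rw [Set.indicator_of_mem hIn, hI0, Set.indicator_of_notMem h𝒜]
    · exact Set.indicator_of_notMem hIn _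

end NormSum

section ClassFunction

open ArithmeticFunction

variable {O : Type*} [CommRing O] {G : Type*} [CommGroup G]

/-- The ideals of class `A`; the ideals of class `0` belong to none of these sets. -/
def classIdeals (cls : Ideal O →*₀ WithZero G) (A : G) : Set (Ideal O) := {I | cls I = A}

lemma mem_classIdeals {cls : Ideal O →*₀ WithZero G} {A : G} {I : Ideal O} :
    I ∈ classIdeals cls A ↔ cls I = A := Iff.rfl

lemma sum_apply_mul_indicator_classIdeals [Fintype G] (cls : Ideal O →*₀ WithZero G)
    (χ : MulChar G ℂ) (f : Ideal O → ℝ) (I : Ideal O) :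
    ∑ A, χ A * ((classIdeals cls A).indicator f I : ℝ) =
      WithZero.lift' χ.toMonoidHom (cls I) * f I := by
  cases hI : cls I using WithZero.recZeroCoe with | zero => ?_ | coe B => ?_
  · refine (Finset.sum_eq_zero fun A _ => ?_).trans (zero_mul _).symm
    rw [Set.indicator_of_notMem, Complex.ofReal_zero, mul_zero]
    exact fun h => WithZero.coe_ne_zero (h.symm.trans hI)
  · rw [Finset.sum_eq_single_of_mem B (Finset.mem_univ B),
      Set.indicator_of_mem (mem_classIdeals.2 hI)]
    · rfl
    · intro A _ hAB
      rw [Set.indicator_of_notMem, Complex.ofReal_zero, mul_zero]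
      exact fun h => hAB (WithZero.coe_injective (h.symm.trans hI))

variable [IsDedekindDomain O] [Module.Free ℤ O] [Module.Finite ℤ O] [CharZero O]

/-- The coefficients of the Dirichlet series `∑ N(I)^{-s}` over the ideals `I` of class `A`. -/
noncomputable def classCount (cls : Ideal O →*₀ WithZero G) (A : G) : ArithmeticFunction ℝ :=
  normSum ((classIdeals cls A).indicator 1)

/-- The coefficients of the Dirichlet series `∑ Λ(I) N(I)^{-s}` over the ideals `I` of class `A`. -/
noncomputable def classVonMangoldt (cls : Ideal O →*₀ WithZero G) (A : G) : ArithmeticFunction ℝ :=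
  normSum ((classIdeals cls A).indicator idealVonMangoldt)

lemma isThetaSequence_classCount (cls : Ideal O →*₀ WithZero G) {A : G} {κ : ℝ}
    (hsum : ∀ t, 0 < t → Summable fun I : {I // cls I = A} => rexp (-(Ideal.absNorm I.1 * t)))
    (hθ : HasThetaExpansion
      (fun t => ∑' I : {I // cls I = A}, rexp (-(Ideal.absNorm I.1 * t))) κ) :
    IsThetaSequence (classCount cls A) κ := by
  have hbot : ⊥ ∉ classIdeals cls A := fun h =>
    WithZero.zero_ne_coe ((map_zero cls).symm.trans h)
  have hhasSum (t : ℝ) (ht : 0 < t) := hasSum_normSum_indicator hbot (hsum t ht)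
  exact ⟨fun n => Finset.sum_nonneg fun I _ => Set.indicator_nonneg (fun _ _ => zero_le_one) I,
    fun t ht => (hhasSum t ht).summable, hθ.congr fun t ht => (hhasSum t ht).tsum_eq.symm⟩

lemma twist_normSum_indicator [Fintype G] (cls : Ideal O →*₀ WithZero G) (f : Ideal O → ℝ)
    (χ : MulChar G ℂ) :
    twist (fun A => normSum ((classIdeals cls A).indicator f)) χ =
      normSum fun I => WithZero.lift' χ.toMonoidHom (cls I) * f I := by
  ext n
  simp only [twist, coe_mk, normSum_apply, Complex.ofReal_sum, Finset.mul_sum]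
  rw [Finset.sum_comm]
  exact Finset.sum_congr rfl fun I _ => sum_apply_mul_indicator_classIdeals cls χ f I

lemma twist_classCount [Fintype G] (cls : Ideal O →*₀ WithZero G) (χ : MulChar G ℂ) :
    twist (classCount cls) χ =
      normSum ((WithZero.lift' χ.toMonoidHom).comp cls : Ideal O →* ℂ) := by
  refine (twist_normSum_indicator cls 1 χ).trans (congrArg normSum (funext fun I => ?_))
  rw [Pi.one_apply, Complex.ofReal_one, mul_one]
  rfl

theorem exists_prime_absNorm_of_isThetaSequence [Finite G] (cls : Ideal O →*₀ WithZero G)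
    {κ : ℝ} (hθ : ∀ A, IsThetaSequence (classCount cls A) κ) (A : G) :
    ∃ I, (Ideal.absNorm I).Prime ∧ cls I = A := by
  have := Fintype.ofFinite G
  have hone (χ : MulChar G ℂ) : twist (classCount cls) χ 1 = 1 := by
    rw [twist_classCount, normSum_apply, idealsOfNorm_one, Finset.sum_singleton, map_one]
  have hnonneg (A : G) (n : ℕ) : 0 ≤ classVonMangoldt cls A n :=
    Finset.sum_nonneg fun I _ => Set.indicator_nonneg (fun I _ => idealVonMangoldt_nonneg I) I
  have hle (A : G) (n : ℕ) : classVonMangoldt cls A n ≤ Module.finrank ℤ O * Λ n :=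
    (Finset.sum_le_sum fun I _ =>
      Set.indicator_le_self' (fun I _ => idealVonMangoldt_nonneg I) I).trans
      (sum_idealVonMangoldt_le fun I hI => (mem_idealsOfNorm.1 hI).2)
  have hmulLog (χ : MulChar G ℂ) : mulLog (twist (classCount cls) χ) =
      twist (classCount cls) χ * twist (classVonMangoldt cls) χ := by
    rw [twist_classCount, mulLog_normSum]
    exact congrArg _ (twist_normSum_indicator cls idealVonMangoldt χ).symm
  obtain ⟨p, hp, hl⟩ := exists_prime_apply_ne_zero_of_mulLog_twist hθ hone hnonneg hle hmulLog A
  obtain ⟨I, hI, hne⟩ := Finset.exists_ne_zero_of_sum_ne_zero hl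
  exact ⟨I, (mem_idealsOfNorm.1 hI).2 ▸ hp, mem_classIdeals.1 (Set.mem_of_indicator_ne_zero hne)⟩

end ClassFunction

section RayClassGroup

open Classical in
/-- The canonical map from a commutative monoid to its group of units with a zero adjoined; it sends
the nonunits to zero. -/
noncomputable def toWithZeroUnits {Q : Type*} [CommMonoid Q] : Q →* WithZero Qˣ where
  toFun q := if h : IsUnit q then h.unit else 0
  map_one' := by simp
  map_mul' p q := by
    by_cases hp : IsUnit p
    · by_cases hq : IsUnit q
      · rw [dif_pos hp, dif_pos hq, dif_pos (hp.mul hq), ← WithZero.coe_mul]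
        exact congrArg _ (Units.ext rfl)
      · rw [dif_neg hq, dif_neg fun h => hq (isUnit_of_mul_isUnit_right h), mul_zero]
    · rw [dif_neg hp, dif_neg fun h => hp (isUnit_of_mul_isUnit_left h), zero_mul]

lemma toWithZeroUnits_coe {Q : Type*} [CommMonoid Q] (u : Qˣ) : toWithZeroUnits (u : Q) = u :=
  (dif_pos u.isUnit).trans (congrArg _ (Units.ext rfl))

lemma toWithZeroUnits_of_not_isUnit {Q : Type*} [CommMonoid Q] {q : Q} (hq : ¬IsUnit q) :
    toWithZeroUnits q = 0 :=
  dif_neg hq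

lemma toWithZeroUnits_eq_coe {Q : Type*} [CommMonoid Q] {q : Q} {u : Qˣ} :
    toWithZeroUnits q = u ↔ q = u := by
  refine ⟨fun h => ?_, fun h => h ▸ toWithZeroUnits_coe u⟩
  by_cases hq : IsUnit q
  · obtain ⟨v, rfl⟩ := hq
    rw [toWithZeroUnits_coe, WithZero.coe_inj] at h
    rw [h]
  · exact absurd (h.symm.trans (toWithZeroUnits_of_not_isUnit hq)) WithZero.coe_ne_zero

variable {O : Type*} [CommRing O] (𝔪 : Ideal O)

/-- Two ideals are ray equivalent modulo `𝔪` when they agree up to a factor `α / β` with `α` and `β`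
congruent to `1` modulo `𝔪`. Ideals that are not coprime to `𝔪` are allowed; their classes are the
nonunits of the quotient monoid. -/
def rayCon : Con (Ideal O) where
  r I J := ∃ α β : O, Ideal.Quotient.mk 𝔪 α = 1 ∧ Ideal.Quotient.mk 𝔪 β = 1 ∧
    Ideal.span {α} * I = Ideal.span {β} * J
  iseqv :=
    { refl := fun I => ⟨1, 1, map_one _, map_one _, rfl⟩
      symm := fun ⟨α, β, hα, hβ, h⟩ => ⟨β, α, hβ, hα, h.symm⟩
      trans := fun ⟨α, β, hα, hβ, h⟩ ⟨γ, δ, hγ, hδ, h'⟩ =>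
        ⟨γ * α, β * δ, by rw [map_mul, hα, hγ, one_mul], by rw [map_mul, hβ, hδ, one_mul], by
          rw [← Ideal.span_singleton_mul_span_singleton, ← Ideal.span_singleton_mul_span_singleton,
            mul_assoc, h, mul_assoc, ← h', mul_left_comm]⟩ }
  mul' := by
    rintro I J I' J' ⟨α, β, hα, hβ, h⟩ ⟨γ, δ, hγ, hδ, h'⟩
    refine ⟨α * γ, β * δ, by rw [map_mul, hα, hγ, one_mul], by rw [map_mul, hβ, hδ, one_mul], ?_⟩
    rw [← Ideal.span_singleton_mul_span_singleton, ← Ideal.span_singleton_mul_span_singleton,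
      mul_mul_mul_comm, h, h', mul_mul_mul_comm]

/-- The ray class group modulo `𝔪`, without conditions at the infinite places. -/
abbrev RayClassGroup : Type _ := (rayCon 𝔪).Quotientˣ

variable {𝔪} [Nontrivial (O ⧸ 𝔪)]

lemma ne_zero_of_mk_eq_one {α : O} (hα : Ideal.Quotient.mk 𝔪 α = 1) : α ≠ 0 := by
  rintro rfl
  exact zero_ne_one ((map_zero (Ideal.Quotient.mk 𝔪)).symm.trans hα)

lemma rayCon_mk_eq_one_iff [IsDomain O] {I : Ideal O} :
    (rayCon 𝔪).mk' I = 1 ↔ ∃ α, Ideal.Quotient.mk 𝔪 α = 1 ∧ I = Ideal.span {α} := by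
  rw [← map_one (rayCon 𝔪).mk']
  refine (Con.eq (rayCon 𝔪)).trans ⟨?_, ?_⟩
  · rintro ⟨α, β, hα, hβ, h⟩
    rw [mul_one] at h
    have hβ' : β ∈ Ideal.span {α} * I := by
      rw [h]
      exact Ideal.mem_span_singleton_self β
    obtain ⟨γ, rfl⟩ := Ideal.mem_span_singleton.1 (Ideal.mul_le_left hβ')
    rw [map_mul, hα, one_mul] at hβ
    rw [← Ideal.span_singleton_mul_span_singleton] at h
    exact ⟨γ, hβ, (Ideal.span_singleton_mul_right_inj (ne_zero_of_mk_eq_one hα)).1 h⟩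
  · rintro ⟨α, hα, rfl⟩
    exact ⟨1, α, map_one _, hα, by
      rw [Ideal.span_singleton_one, Ideal.top_mul, mul_one]⟩

variable [IsDedekindDomain O]

lemma isUnit_rayCon_mk_iff {I : Ideal O} : IsUnit ((rayCon 𝔪).mk' I) ↔ IsCoprime I 𝔪 := by
  rw [isUnit_iff_exists_inv, Ideal.isCoprime_iff_exists]
  constructor
  · rintro ⟨B, hB⟩
    obtain ⟨J, rfl⟩ := Con.mk'_surjective B
    rw [← map_mul, rayCon_mk_eq_one_iff] at hB
    obtain ⟨α, hα, h⟩ := hB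
    have hαI : α ∈ I * J := by
      rw [h]
      exact Ideal.mem_span_singleton_self α
    refine ⟨α, Ideal.mul_le_left hαI, 1 - α, ?_, by ring⟩
    rw [← Ideal.Quotient.eq_zero_iff_mem, map_sub, map_one, hα, sub_self]
  · rintro ⟨α, hαI, β, hβ, hαβ⟩
    obtain ⟨J, hJ⟩ := Ideal.dvd_span_singleton.2 hαI
    refine ⟨(rayCon 𝔪).mk' J, ?_⟩
    rw [← map_mul, rayCon_mk_eq_one_iff]
    refine ⟨α, ?_, hJ.symm⟩
    rw [← map_one (Ideal.Quotient.mk 𝔪), ← hαβ, map_add, Ideal.Quotient.eq_zero_iff_mem.2 hβ,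
      add_zero]

variable (𝔪) in
/-- The ray class of an ideal, with the value `0` at the ideals that are not coprime to `𝔪`. -/
noncomputable def rayClass : Ideal O →*₀ WithZero (RayClassGroup 𝔪) where
  __ := toWithZeroUnits.comp (rayCon 𝔪).mk'
  map_zero' := toWithZeroUnits_of_not_isUnit fun h => by
    obtain ⟨α, hα, β, hβ, hαβ⟩ := Ideal.isCoprime_iff_exists.1 (isUnit_rayCon_mk_iff.1 h)
    rw [Ideal.mem_bot.1 hα, zero_add] at hαβ
    exact one_ne_zero ((map_one (Ideal.Quotient.mk 𝔪)).symm.trans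
      (Ideal.Quotient.eq_zero_iff_mem.2 (hαβ ▸ hβ)))

lemma rayClass_eq_one_iff {I : Ideal O} :
    rayClass 𝔪 I = 1 ↔ ∃ α, Ideal.Quotient.mk 𝔪 α = 1 ∧ I = Ideal.span {α} := by
  rw [← rayCon_mk_eq_one_iff, ← Units.val_one]
  exact toWithZeroUnits_eq_coe

lemma rayClass_ne_zero_iff {I : Ideal O} : rayClass 𝔪 I ≠ 0 ↔ IsCoprime I 𝔪 := by
  rw [← isUnit_rayCon_mk_iff]
  refine ⟨not_imp_comm.1 toWithZeroUnits_of_not_isUnit, fun ⟨u, hu⟩ => ?_⟩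
  exact ne_of_eq_of_ne (toWithZeroUnits_eq_coe.2 hu.symm) WithZero.coe_ne_zero

lemma exists_rayClass_eq (A : RayClassGroup 𝔪) : ∃ I : Ideal O, rayClass 𝔪 I = A := by
  obtain ⟨I, hI⟩ := Con.mk'_surjective A.val
  exact ⟨I, toWithZeroUnits_eq_coe.2 hI⟩

lemma exists_mul_eq_span_of_isCoprime {I : Ideal O} (hI : IsCoprime I 𝔪) :
    ∃ α J, Ideal.Quotient.mk 𝔪 α = 1 ∧ I * J = Ideal.span {α} := by
  obtain ⟨B, hB⟩ := isUnit_iff_exists_inv.1 (isUnit_rayCon_mk_iff.2 hI)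
  obtain ⟨J, rfl⟩ := Con.mk'_surjective B
  obtain ⟨α, hα, h⟩ := rayCon_mk_eq_one_iff.1 ((map_mul _ I J).trans hB)
  exact ⟨α, J, hα, h⟩

lemma rayClass_span_eq_of_mk_eq {γ δ : O}
    (h : Ideal.Quotient.mk 𝔪 γ = Ideal.Quotient.mk 𝔪 δ) :
    rayClass 𝔪 (Ideal.span {γ}) = rayClass 𝔪 (Ideal.span {δ}) := by
  have key {γ δ : O} (h : Ideal.Quotient.mk 𝔪 γ = Ideal.Quotient.mk 𝔪 δ)
      (hγ : rayClass 𝔪 (Ideal.span {γ}) ≠ 0) :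
      rayClass 𝔪 (Ideal.span {γ}) = rayClass 𝔪 (Ideal.span {δ}) := by
    obtain ⟨α, hα, β, hβ, hαβ⟩ := Ideal.isCoprime_iff_exists.1 (rayClass_ne_zero_iff.1 hγ)
    obtain ⟨η, rfl⟩ := Ideal.mem_span_singleton'.1 hα
    have hηγ : Ideal.Quotient.mk 𝔪 (η * γ) = 1 := by
      rw [← map_one (Ideal.Quotient.mk 𝔪), ← hαβ, map_add, Ideal.Quotient.eq_zero_iff_mem.2 hβ,
        add_zero]
    have hηδ : Ideal.Quotient.mk 𝔪 (η * δ) = 1 := by rw [map_mul, ← h, ← map_mul, hηγ]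
    have hone {ε : O} (hε : Ideal.Quotient.mk 𝔪 (η * ε) = 1) :
        rayClass 𝔪 (Ideal.span {η}) * rayClass 𝔪 (Ideal.span {ε}) = 1 := by
      rw [← map_mul, Ideal.span_singleton_mul_span_singleton]
      exact rayClass_eq_one_iff.2 ⟨_, hε, rfl⟩
    exact (eq_inv_of_mul_eq_one_right (hone hηγ)).trans
      (eq_inv_of_mul_eq_one_right (hone hηδ)).symm
  by_cases hγ : rayClass 𝔪 (Ideal.span {γ}) = 0
  · by_contra hne
    exact hne (key h.symm fun hδ => hne (hγ.trans hδ.symm)).symm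
  · exact key h hγ

open scoped nonZeroDivisors in
lemma exists_rayClass_eq_span_mul {I J : (Ideal O)⁰} (hIJ : ClassGroup.mk0 I = ClassGroup.mk0 J)
    (hJ : IsCoprime J.1 𝔪) :
    ∃ γ, rayClass 𝔪 I.1 = rayClass 𝔪 (Ideal.span {γ}) * rayClass 𝔪 J.1 := by
  obtain ⟨x, y, hx, -, hxy⟩ := ClassGroup.mk0_eq_mk0_iff.1 hIJ
  obtain ⟨α, J', hα, hJJ'⟩ := exists_mul_eq_span_of_isCoprime hJ
  have hxI : Ideal.span {x} * (I.1 * J') = Ideal.span {y * α} := by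
    rw [← mul_assoc, hxy, mul_assoc, hJJ', Ideal.span_singleton_mul_span_singleton]
  have hmem : y * α ∈ Ideal.span {x} * (I.1 * J') := by
    rw [hxI]
    exact Ideal.mem_span_singleton_self _
  obtain ⟨γ, hγ⟩ := Ideal.mem_span_singleton.1 (Ideal.mul_le_left hmem)
  rw [hγ, ← Ideal.span_singleton_mul_span_singleton, Ideal.span_singleton_mul_right_inj hx] at hxI
  refine ⟨γ, ?_⟩
  have hJ' : rayClass 𝔪 J' * rayClass 𝔪 J.1 = 1 := by
    rw [← map_mul, mul_comm, rayClass_eq_one_iff]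
    exact ⟨α, hα, hJJ'⟩
  rw [← hxI, map_mul, mul_assoc, hJ', mul_one]

open scoped nonZeroDivisors in
-- A ray class is determined by an ideal class and a residue modulo `𝔪`.
instance [Finite (ClassGroup O)] [Finite (O ⧸ 𝔪)] : Finite (RayClassGroup 𝔪) := by
  choose I hI using exists_rayClass_eq (𝔪 := 𝔪)
  have hne (A : RayClassGroup 𝔪) : rayClass 𝔪 (I A) ≠ 0 := by
    rw [hI]
    exact WithZero.coe_ne_zero
  let I₀ (A : RayClassGroup 𝔪) : (Ideal O)⁰ :=
    ⟨I A, mem_nonZeroDivisors_of_ne_zero fun h => hne A (by rw [h, map_zero])⟩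
  have hfiber (A : RayClassGroup 𝔪) :
      {B | ClassGroup.mk0 (I₀ B) = ClassGroup.mk0 (I₀ A)}.Finite := by
    let F (q : O ⧸ 𝔪) : WithZero (RayClassGroup 𝔪) := rayClass 𝔪 (Ideal.span {q.out}) * A
    refine ((Set.finite_range F).preimage WithZero.coe_injective.injOn).subset fun B hB => ?_
    obtain ⟨γ, hγ⟩ := exists_rayClass_eq_span_mul hB (rayClass_ne_zero_iff.1 (hne A))
    refine ⟨Ideal.Quotient.mk 𝔪 γ, ?_⟩
    calc
      F (Ideal.Quotient.mk 𝔪 γ) = rayClass 𝔪 (Ideal.span {γ}) * A :=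
        congrArg (· * _) (rayClass_span_eq_of_mk_eq (Ideal.Quotient.mk_out _))
      _ = rayClass 𝔪 (Ideal.span {γ}) * rayClass 𝔪 (I A) := by rw [hI]
      _ = rayClass 𝔪 (I B) := hγ.symm
      _ = B := hI B
  refine Set.finite_univ_iff.1 (.of_finite_fibers (fun A => ClassGroup.mk0 (I₀ A))
    (Set.toFinite _) ?_)
  rintro _ ⟨A, -, rfl⟩
  exact (hfiber A).subset Set.inter_subset_right

end RayClassGroup

section CosetTheta

variable {O : Type*} [CommRing O]

/-- The elements of a coset of `𝔞`, translated to `𝔞` by the chosen representative. -/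
noncomputable def cosetEquiv (𝔞 : Ideal O) (q : O ⧸ 𝔞) : {α // Ideal.Quotient.mk 𝔞 α = q} ≃ 𝔞 where
  toFun α := ⟨α - q.out, by
    rw [← Ideal.Quotient.eq_zero_iff_mem, map_sub, α.2, Ideal.Quotient.mk_out, sub_self]⟩
  invFun x := ⟨q.out + x, by
    rw [map_add, Ideal.Quotient.mk_out, Ideal.Quotient.eq_zero_iff_mem.2 x.2, add_zero]⟩
  left_inv α := Subtype.ext (add_sub_cancel _ _)
  right_inv x := Subtype.ext (add_sub_cancel_left _ _)

/-- The theta series `∑ exp (-t |φ α|²)` over the elements `α` of the coset `q`. -/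
noncomputable def cosetTheta (φ : O →+* ℂ) {𝔞 : Ideal O} (q : O ⧸ 𝔞) (t : ℝ) : ℝ :=
  ∑' α : {α // Ideal.Quotient.mk 𝔞 α = q}, rexp (-(t * ‖φ α‖ ^ 2))

variable [IsDedekindDomain O] [Module.Free ℤ O]

/-- An embedding of an imaginary quadratic order as a lattice in `ℂ`: the norm is the squared
absolute value. That `O` has rank `2` is a consequence. -/
structure IsQuadraticEmbedding (φ : O →+* ℂ) : Prop where
  absNorm_span : ∀ α, (Ideal.absNorm (Ideal.span {α}) : ℝ) = ‖φ α‖ ^ 2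
  exists_im_ne_zero : ∃ γ, (φ γ).im ≠ 0

namespace IsQuadraticEmbedding

variable {φ : O →+* ℂ} (hφ : IsQuadraticEmbedding φ)
include hφ

lemma norm_unit (u : Oˣ) : ‖φ u‖ = 1 := by
  have h := hφ.absNorm_span u
  rw [Ideal.span_singleton_eq_top.2 u.isUnit, Ideal.absNorm_top, Nat.cast_one] at h
  exact (pow_eq_one_iff_of_nonneg (norm_nonneg _) two_ne_zero).1 h.symm

variable [Module.Finite ℤ O]

lemma finrank_eq : Module.finrank ℤ O = 2 := by
  have h := hφ.absNorm_span (2 : ℕ)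
  rw [Ideal.absNorm_span_natCast, map_natCast, Complex.norm_natCast] at h
  exact Nat.pow_right_injective le_rfl (by exact_mod_cast h)

lemma injective : Function.Injective φ := by
  refine (injective_iff_map_eq_zero φ).2 fun α hα => ?_
  have h := hφ.absNorm_span α
  rw [hα, norm_zero, zero_pow two_ne_zero, Nat.cast_eq_zero, Ideal.absNorm_eq_zero_iff] at h
  exact Ideal.span_singleton_eq_bot.1 h

lemma exists_lattice {𝔞 : Ideal O} (h𝔞 : 𝔞 ≠ ⊥) :
    ∃ u v : ℂ, u ≠ 0 ∧ (v / u).im ≠ 0 ∧ ∃ e : 𝔞 ≃ ℤ × ℤ,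
      ∀ α : 𝔞, φ α = (e α).2 * u + (e α).1 * v := by
  obtain ⟨γ, hγ⟩ := hφ.exists_im_ne_zero
  let w : Module.Basis (Fin 2) ℤ 𝔞 :=
    𝔞.selfBasis (Module.finBasisOfFinrankEq ℤ O hφ.finrank_eq) h𝔞
  let e : 𝔞 ≃ ℤ × ℤ :=
    w.equivFun.toEquiv.trans ((finTwoArrowEquiv ℤ).trans (Equiv.prodComm ℤ ℤ))
  have he (α : 𝔞) : φ α = (e α).2 * φ (w 0) + (e α).1 * φ (w 1) := by
    have h := congrArg (fun x : 𝔞 => φ x) (w.sum_repr α)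
    rw [Fin.sum_univ_two] at h
    rw [← h]
    simp [e]
  have hu : φ (w 0) ≠ 0 :=
    (map_ne_zero_iff φ hφ.injective).2 fun h => w.ne_zero 0 (Subtype.ext h)
  refine ⟨φ (w 0), φ (w 1), hu, fun him => hγ ?_, e, he⟩
  -- Multiplication by `γ` preserves `𝔞`, so `γ` would be real if `w 0` and `w 1` were dependent.
  set x : 𝔞 := ⟨γ * w 0, 𝔞.mul_mem_left γ (w 0).2⟩
  have hγ : φ γ = (e x).2 + (e x).1 * (φ (w 1) / φ (w 0)) := by
    have hx := he x
    rw [show (x : O) = γ * w 0 from rfl, map_mul] at hx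
    field_simp
    exact hx
  rw [hγ]
  simp [Complex.mul_im, him]

lemma exists_coset_equiv {𝔞 : Ideal O} (h𝔞 : 𝔞 ≠ ⊥) :
    ∃ u v : ℂ, u ≠ 0 ∧ (v / u).im ≠ 0 ∧ ∀ q : O ⧸ 𝔞,
      ∃ e : {α // Ideal.Quotient.mk 𝔞 α = q} ≃ ℤ × ℤ,
        ∀ α, φ α.1 = φ q.out + (e α).2 * u + (e α).1 * v := by
  obtain ⟨u, v, hu, huv, e, he⟩ := hφ.exists_lattice h𝔞
  refine ⟨u, v, hu, huv, fun q => ⟨(cosetEquiv 𝔞 q).trans e, fun α => ?_⟩⟩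
  have hα : (α : O) = q.out + cosetEquiv 𝔞 q α := (add_sub_cancel _ _).symm
  rw [hα, map_add, he, add_assoc]
  rfl

lemma summable_coset {𝔞 : Ideal O} (h𝔞 : 𝔞 ≠ ⊥) (q : O ⧸ 𝔞) {t : ℝ} (ht : 0 < t) :
    Summable fun α : {α // Ideal.Quotient.mk 𝔞 α = q} => rexp (-(t * ‖φ α‖ ^ 2)) := by
  obtain ⟨u, v, hu, huv, hcoset⟩ := hφ.exists_coset_equiv h𝔞
  obtain ⟨e, he⟩ := hcoset q
  refine Summable.congr ?_ fun α => by rw [he]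
  exact (e.summable_iff (f := fun p : ℤ × ℤ => rexp (-(t * ‖φ q.out + p.2 * u + p.1 * v‖ ^ 2)))).2
    (summable_lattice_gaussian hu huv _ ht)

lemma exists_forall_hasThetaExpansion_cosetTheta {𝔞 : Ideal O} (h𝔞 : 𝔞 ≠ ⊥) :
    ∃ κ, ∀ q : O ⧸ 𝔞, HasThetaExpansion (cosetTheta φ q) κ := by
  obtain ⟨u, v, hu, huv, hcoset⟩ := hφ.exists_coset_equiv h𝔞
  refine ⟨_, fun q => (hasThetaExpansion_lattice hu huv (φ q.out)).congr fun t _ => ?_⟩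
  obtain ⟨e, he⟩ := hcoset q
  exact (e.tsum_eq fun p : ℤ × ℤ => rexp (-(t * ‖φ q.out + p.2 * u + p.1 * v‖ ^ 2))).symm.trans
    (tsum_congr fun α => by rw [he])

lemma sum_cosetTheta {𝔞 : Ideal O} (h𝔞 : 𝔞 ≠ ⊥) [Fintype (O ⧸ 𝔞)] {t : ℝ} (ht : 0 < t) :
    ∑ q : O ⧸ 𝔞, cosetTheta φ q t = ∑' α : O, rexp (-(t * ‖φ α‖ ^ 2)) := by
  let F (p : Σ q : O ⧸ 𝔞, {α // Ideal.Quotient.mk 𝔞 α = q}) : ℝ := rexp (-(t * ‖φ p.2‖ ^ 2))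
  have hF : Summable F :=
    (summable_sigma_of_nonneg fun _ => (Real.exp_pos _).le).2
      ⟨fun q => hφ.summable_coset h𝔞 q ht, (hasSum_fintype _).summable⟩
  calc
    ∑ q : O ⧸ 𝔞, cosetTheta φ q t = ∑' p, F p := by rw [hF.tsum_sigma, tsum_fintype]; rfl
    _ = ∑' α : O, rexp (-(t * ‖φ α‖ ^ 2)) :=
      (Equiv.sigmaFiberEquiv (Ideal.Quotient.mk 𝔞)).tsum_eq fun α => rexp (-(t * ‖φ α‖ ^ 2))

-- All cosets of `𝔞` have the same constant, and their theta series add up to the one of `O`.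
theorem exists_hasThetaExpansion_cosetTheta :
    ∃ κ : ℝ, ∀ {𝔞 : Ideal O}, 𝔞 ≠ ⊥ → ∀ q : O ⧸ 𝔞,
      HasThetaExpansion (cosetTheta φ q) (κ / Ideal.absNorm 𝔞) := by
  have hsum {𝔞 : Ideal O} (h𝔞 : 𝔞 ≠ ⊥) {κ : ℝ}
      (hκ : ∀ q : O ⧸ 𝔞, HasThetaExpansion (cosetTheta φ q) κ) :
      HasThetaExpansion (fun t => ∑' α : O, rexp (-(t * ‖φ α‖ ^ 2))) (Ideal.absNorm 𝔞 * κ) := by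
    have := Ideal.finiteQuotientOfFreeOfNeBot 𝔞 h𝔞
    have := Fintype.ofFinite (O ⧸ 𝔞)
    have h := (HasThetaExpansion.sum fun q (_ : q ∈ Finset.univ) => hκ q).congr
      fun t ht => hφ.sum_cosetTheta h𝔞 ht
    rwa [Finset.sum_const, nsmul_eq_mul, Finset.card_univ, ← Nat.card_eq_fintype_card] at h
  obtain ⟨κ, hκ⟩ := hφ.exists_forall_hasThetaExpansion_cosetTheta (top_ne_bot (α := Ideal O))
  refine ⟨Ideal.absNorm (⊤ : Ideal O) * κ, fun {𝔞} h𝔞 => ?_⟩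
  obtain ⟨κ', hκ'⟩ := hφ.exists_forall_hasThetaExpansion_cosetTheta h𝔞
  have h𝔞' : (Ideal.absNorm 𝔞 : ℝ) ≠ 0 :=
    Nat.cast_ne_zero.2 (mt Ideal.absNorm_eq_zero_iff.1 h𝔞)
  rwa [(hsum top_ne_bot hκ).unique (hsum h𝔞 hκ'), mul_div_cancel_left₀ _ h𝔞']

lemma one_le_norm {α : O} (hα : α ≠ 0) : 1 ≤ ‖φ α‖ := by
  have h : (1 : ℝ) ≤ Ideal.absNorm (Ideal.span {α}) :=
    Nat.one_le_cast.2 (Nat.one_le_iff_ne_zero.2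
      (mt Ideal.absNorm_eq_zero_iff.1 (mt Ideal.span_singleton_eq_bot.1 hα)))
  rw [hφ.absNorm_span] at h
  exact (one_le_sq_iff₀ (norm_nonneg _)).1 h

lemma unit_eq_one_of_mk_eq_one {M : ℕ} (hM : 3 ≤ M) {u : Oˣ}
    (hu : Ideal.Quotient.mk (Ideal.span {(M : O)}) u = 1) : u = 1 := by
  rw [← map_one (Ideal.Quotient.mk _), Ideal.Quotient.eq, Ideal.mem_span_singleton] at hu
  obtain ⟨x, hx⟩ := hu
  by_contra hne
  have hx0 : x ≠ 0 := by
    rintro rfl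
    exact hne (Units.ext (sub_eq_zero.1 (hx.trans (mul_zero _))))
  have hM' : (3 : ℝ) ≤ M := mod_cast hM
  have : (3 : ℝ) ≤ 2 :=
    calc
      (3 : ℝ) ≤ M * ‖φ x‖ := by nlinarith [hφ.one_le_norm hx0]
      _ = ‖φ u - 1‖ := by
        rw [← map_one φ, ← map_sub, hx, map_mul, map_natCast, norm_mul, Complex.norm_natCast]
      _ ≤ ‖φ u‖ + ‖(1 : ℂ)‖ := norm_sub_le _ _
      _ = 2 := by rw [hφ.norm_unit, norm_one, one_add_one_eq_two]
  norm_num at this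

end IsQuadraticEmbedding

end CosetTheta

section RayClassTheta

variable {O : Type*} [CommRing O] {𝔪 : Ideal O}

lemma mk_mul_eq_mk_iff {J : Ideal O} (hJ : IsCoprime J 𝔪) {α₀ : O} (hα₀ : α₀ ∈ J)
    (hα₀' : Ideal.Quotient.mk 𝔪 α₀ = 1) {α : O} :
    Ideal.Quotient.mk (J * 𝔪) α = Ideal.Quotient.mk (J * 𝔪) α₀ ↔
      α ∈ J ∧ Ideal.Quotient.mk 𝔪 α = 1 := by
  rw [Ideal.Quotient.eq, Ideal.mul_eq_inf_of_isCoprime hJ, Ideal.mem_inf, ← hα₀',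
    ← Ideal.Quotient.eq (I := 𝔪), J.sub_mem_iff_left hα₀]

lemma eq_of_span_singleton_eq [IsDomain O]
    (hunit : ∀ u : Oˣ, Ideal.Quotient.mk 𝔪 u = 1 → u = 1) {α β : O}
    (hα : Ideal.Quotient.mk 𝔪 α = 1) (hβ : Ideal.Quotient.mk 𝔪 β = 1)
    (h : Ideal.span {α} = Ideal.span {β}) : α = β := by
  obtain ⟨u, rfl⟩ := Ideal.span_singleton_eq_span_singleton.1 h
  rw [map_mul, hα, one_mul] at hβ
  rw [hunit u hβ, Units.val_one, mul_one]

variable [IsDedekindDomain O] [Nontrivial (O ⧸ 𝔪)]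

lemma rayClass_eq_coe_iff {A : RayClassGroup 𝔪} {I J : Ideal O}
    (hJ : rayClass 𝔪 J = ((A⁻¹ : RayClassGroup 𝔪) : WithZero (RayClassGroup 𝔪))) :
    rayClass 𝔪 I = A ↔ ∃ α, Ideal.Quotient.mk 𝔪 α = 1 ∧ I * J = Ideal.span {α} := by
  rw [← rayClass_eq_one_iff, map_mul, hJ, WithZero.coe_inv, ← div_eq_mul_inv,
    div_eq_one_iff_eq WithZero.coe_ne_zero]

-- The ideals `I` of the class `A` are the quotients by `J` of the principal ideals `(α)` with
-- `α ∈ J` and `α ≡ 1` modulo `𝔪`.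
lemma exists_coset_equiv_rayClass (hunit : ∀ u : Oˣ, Ideal.Quotient.mk 𝔪 u = 1 → u = 1)
    (A : RayClassGroup 𝔪) :
    ∃ J : Ideal O, J ≠ ⊥ ∧ ∃ (q : O ⧸ (J * 𝔪))
      (e : {I // rayClass 𝔪 I = A} ≃ {α // Ideal.Quotient.mk (J * 𝔪) α = q}),
        ∀ I, I.1 * J = Ideal.span {(e I).1} := by
  obtain ⟨J, hJ⟩ := exists_rayClass_eq A⁻¹
  have hJ0 : rayClass 𝔪 J ≠ 0 := hJ ▸ WithZero.coe_ne_zero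
  have hJbot : J ≠ ⊥ := by
    rintro rfl
    exact hJ0 (map_zero _)
  have hcop := rayClass_ne_zero_iff.1 hJ0
  obtain ⟨α₀, J', hα₀, hJJ'⟩ := exists_mul_eq_span_of_isCoprime hcop
  have hα₀J : α₀ ∈ J := by
    refine Ideal.mul_le_left (J := J') ?_
    rw [hJJ']
    exact Ideal.mem_span_singleton_self α₀
  have hcoset {α : O} := mk_mul_eq_mk_iff hcop hα₀J hα₀ (α := α)
  choose f hf hfJ using fun I : {I // rayClass 𝔪 I = A} => (rayClass_eq_coe_iff hJ).1 I.2
  have hmem (I) : f I ∈ J := by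
    refine Ideal.mul_le_right (I := I.1) ?_
    rw [hfJ]
    exact Ideal.mem_span_singleton_self _
  refine ⟨J, hJbot, Ideal.Quotient.mk _ α₀, .ofBijective
    (fun I => ⟨f I, hcoset.2 ⟨hmem I, hf I⟩⟩) ⟨fun I I' h => ?_, fun α => ?_⟩, hfJ⟩
  · refine Subtype.ext (mul_right_cancel₀ hJbot ?_)
    rw [hfJ, hfJ, show f I = f I' from congrArg Subtype.val h]
  · obtain ⟨hαJ, hα⟩ := hcoset.1 α.2
    obtain ⟨I, hI⟩ := Ideal.dvd_span_singleton.2 hαJ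
    have hIJ : I * J = Ideal.span {α.1} := by rw [mul_comm, hI]
    refine ⟨⟨I, (rayClass_eq_coe_iff hJ).2 ⟨α, hα, hIJ⟩⟩, Subtype.ext ?_⟩
    exact eq_of_span_singleton_eq hunit (hf _) hα ((hfJ _).symm.trans hIJ)

namespace IsQuadraticEmbedding

variable [Module.Free ℤ O] [Module.Finite ℤ O] {φ : O →+* ℂ} (hφ : IsQuadraticEmbedding φ)
  (h𝔪 : 𝔪 ≠ ⊥) (hunit : ∀ u : Oˣ, Ideal.Quotient.mk 𝔪 u = 1 → u = 1)
include hφ h𝔪 hunit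

lemma exists_rayClass_theta_eq (A : RayClassGroup 𝔪) :
    ∃ J : Ideal O, J ≠ ⊥ ∧ ∃ q : O ⧸ (J * 𝔪), ∀ t, 0 < t →
      HasSum (fun I : {I // rayClass 𝔪 I = A} => rexp (-(Ideal.absNorm I.1 * t)))
        (cosetTheta φ q (t / Ideal.absNorm J)) := by
  obtain ⟨J, hJ, q, e, he⟩ := exists_coset_equiv_rayClass hunit A
  have hJ0 : (0 : ℝ) < Ideal.absNorm J :=
    Nat.cast_pos.2 (Nat.pos_of_ne_zero (mt Ideal.absNorm_eq_zero_iff.1 hJ))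
  refine ⟨J, hJ, q, fun t ht => ?_⟩
  have hnorm (I : {I // rayClass 𝔪 I = A}) :
      (Ideal.absNorm I.1 * t : ℝ) = t / Ideal.absNorm J * ‖φ (e I)‖ ^ 2 := by
    rw [← hφ.absNorm_span, ← he, map_mul, Nat.cast_mul]
    field_simp
  simp only [hnorm]
  exact e.hasSum_iff.2 (hφ.summable_coset (mul_ne_zero hJ h𝔪) q (div_pos ht hJ0)).hasSum

lemma exists_isThetaSequence_classCount [CharZero O] :
    ∃ κ, ∀ A : RayClassGroup 𝔪, IsThetaSequence (classCount (rayClass 𝔪) A) κ := by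
  obtain ⟨κ, hκ⟩ := hφ.exists_hasThetaExpansion_cosetTheta
  refine ⟨κ / Ideal.absNorm 𝔪, fun A => ?_⟩
  obtain ⟨J, hJ, q, hsum⟩ := hφ.exists_rayClass_theta_eq h𝔪 hunit A
  have hJ0 : (0 : ℝ) < Ideal.absNorm J :=
    Nat.cast_pos.2 (Nat.pos_of_ne_zero (mt Ideal.absNorm_eq_zero_iff.1 hJ))
  have hθ := ((hκ (mul_ne_zero hJ h𝔪) q).comp_div hJ0).congr fun t ht => (hsum t ht).tsum_eq.symm
  rw [map_mul, Nat.cast_mul, div_mul_eq_mul_div, mul_comm κ, mul_div_mul_left _ _ hJ0.ne'] at hθ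
  exact isThetaSequence_classCount _ (fun t ht => (hsum t ht).summable) hθ

theorem exists_prime_absNorm_rayClass_eq [Finite (ClassGroup O)]
    (A : RayClassGroup 𝔪) : ∃ I, (Ideal.absNorm I).Prime ∧ rayClass 𝔪 I = A := by
  have := Ideal.finiteQuotientOfFreeOfNeBot 𝔪 h𝔪
  have := RingHom.charZero φ
  obtain ⟨κ, hκ⟩ := hφ.exists_isThetaSequence_classCount h𝔪 hunit
  exact exists_prime_absNorm_of_isThetaSequence _ hκ A

theorem exists_prime_absNorm_mul_eq_span [Finite (ClassGroup O)] {J : Ideal O}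
    (hJ : IsCoprime J 𝔪) :
    ∃ I α, (Ideal.absNorm I).Prime ∧ Ideal.Quotient.mk 𝔪 α = 1 ∧ I * J = Ideal.span {α} := by
  obtain ⟨A, hA⟩ := WithZero.ne_zero_iff_exists.1 (rayClass_ne_zero_iff.2 hJ)
  obtain ⟨I, hI, hIA⟩ := hφ.exists_prime_absNorm_rayClass_eq h𝔪 hunit A⁻¹
  obtain ⟨α, hα, hIJ⟩ := (rayClass_eq_coe_iff (by rw [inv_inv, hA])).1 hIA
  exact ⟨I, α, hI, hα, hIJ⟩

end IsQuadraticEmbedding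

end RayClassTheta

section EquivalentForm

lemma isCoprime_of_forall_prime_not_dvd {x y : ℤ}
    (h : ∀ q : ℕ, q.Prime → (q : ℤ) ∣ x → ¬(q : ℤ) ∣ y) : IsCoprime x y := by
  rw [Int.isCoprime_iff_gcd_eq_one]
  refine Nat.coprime_of_dvd fun q hq hx hy => ?_
  exact h q hq (Int.natCast_dvd.2 hx) (Int.natCast_dvd.2 hy)

lemma exists_forall_prime_dvd_iff {M : ℕ} (hM : M ≠ 0) (P : ℕ → Prop) :
    ∃ u : ℤ, ∀ q : ℕ, q.Prime → ((q : ℤ) ∣ u ↔ q ∣ M ∧ P q) := by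
  classical
  have hS : ∀ p ∈ M.primeFactors.filter P, p.Prime := fun p hp =>
    Nat.prime_of_mem_primeFactors (Finset.mem_filter.1 hp).1
  refine ⟨(∏ p ∈ M.primeFactors.filter P, p : ℕ), fun q hq => ?_⟩
  have h0 : ∏ p ∈ M.primeFactors.filter P, p ≠ 0 :=
    Finset.prod_ne_zero_iff.2 fun p hp => (hS p hp).ne_zero
  have h : q ∈ (∏ p ∈ M.primeFactors.filter P, p).primeFactors ↔ _ :=
    Nat.mem_primeFactors_of_ne_zero h0
  rw [Nat.primeFactors_prod hS, Finset.mem_filter, Nat.mem_primeFactors_of_ne_zero hM,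
    and_iff_right hq, and_iff_right hq] at h
  exact Int.natCast_dvd_natCast.trans h.symm

section CommRing

variable {R : Type*} [CommRing R] {p a b c u v : R}

lemma not_dvd_form_of_dvd_right (hp : Prime p) (ha : ¬p ∣ a) (hu : ¬p ∣ u) (hv : p ∣ v) :
    ¬p ∣ a * u ^ 2 + b * u * v + c * v ^ 2 := by
  rw [show a * u ^ 2 + b * u * v + c * v ^ 2 = a * u ^ 2 + v * (b * u + c * v) by ring,
    dvd_add_left (hv.mul_right _)]
  exact hp.not_dvd_mul ha fun h => hu (hp.dvd_of_dvd_pow h)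

lemma not_dvd_form_of_dvd_left (hp : Prime p) (hc : ¬p ∣ c) (hu : p ∣ u) (hv : ¬p ∣ v) :
    ¬p ∣ a * u ^ 2 + b * u * v + c * v ^ 2 := by
  rw [show a * u ^ 2 + b * u * v + c * v ^ 2 = c * v ^ 2 + b * v * u + a * u ^ 2 by ring]
  exact not_dvd_form_of_dvd_right hp hc hv hu

lemma not_dvd_form_of_dvd_outer (hp : Prime p) (ha : p ∣ a) (hb : ¬p ∣ b) (hc : p ∣ c)
    (hu : ¬p ∣ u) (hv : ¬p ∣ v) : ¬p ∣ a * u ^ 2 + b * u * v + c * v ^ 2 := by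
  rw [dvd_add_left (hc.mul_right _), dvd_add_right (ha.mul_right _)]
  exact hp.not_dvd_mul (hp.not_dvd_mul hb hu) hv

lemma form_pos [LinearOrder R] [IsStrictOrderedRing R] (ha : 0 < a)
    (hdisc : b ^ 2 - 4 * a * c < 0) (huv : u ≠ 0 ∨ v ≠ 0) :
    0 < a * u ^ 2 + b * u * v + c * v ^ 2 := by
  have h : 0 < 4 * a * (a * u ^ 2 + b * u * v + c * v ^ 2) := by
    rw [show 4 * a * (a * u ^ 2 + b * u * v + c * v ^ 2) =
      (2 * a * u + b * v) ^ 2 + -(b ^ 2 - 4 * a * c) * v ^ 2 by ring]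
    rcases eq_or_ne v 0 with rfl | hv
    · have hu : u ≠ 0 := huv.resolve_right (not_not.2 rfl)
      simp only [mul_zero, add_zero, zero_pow two_ne_zero]
      positivity
    · have := neg_pos.2 hdisc
      positivity
  exact pos_of_mul_pos_right h (by positivity)

end CommRing

-- The prime divisors of `M` are distributed over `u` and `v` so that exactly one term of the form
-- survives modulo each of them.
lemma exists_isCoprime_form {a b c : ℤ} (hprim : Int.gcd a (Int.gcd b c) = 1) {M : ℕ}
    (hM : M ≠ 0) :
    ∃ u v : ℤ, IsCoprime u v ∧ IsCoprime (a * u ^ 2 + b * u * v + c * v ^ 2) (M : ℤ) := by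
  obtain ⟨u, hu⟩ := exists_forall_prime_dvd_iff hM fun q => (q : ℤ) ∣ a ∧ ¬(q : ℤ) ∣ c
  obtain ⟨v, hv⟩ := exists_forall_prime_dvd_iff hM fun q => ¬(q : ℤ) ∣ a
  refine ⟨u, v, isCoprime_of_forall_prime_not_dvd fun q hq hqu hqv => ?_,
    isCoprime_of_forall_prime_not_dvd fun q hq hqQ hqM => ?_⟩
  · exact ((hv q hq).1 hqv).2 ((hu q hq).1 hqu).2.1
  have hq' := Nat.prime_iff_prime_int.1 hq
  specialize hu q hq
  specialize hv q hq
  rw [and_iff_right (Int.natCast_dvd_natCast.1 hqM)] at hu hv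
  by_cases ha : (q : ℤ) ∣ a
  · have hqv : ¬(q : ℤ) ∣ v := fun h => hv.1 h ha
    by_cases hc : (q : ℤ) ∣ c
    · have hb : ¬(q : ℤ) ∣ b := fun hb => by
        have h := Int.dvd_coe_gcd ha (Int.dvd_coe_gcd hb hc)
        rw [hprim] at h
        exact hq'.not_dvd_one h
      exact not_dvd_form_of_dvd_outer hq' ha hb hc (fun h => (hu.1 h).2 hc) hqv hqQ
    · exact not_dvd_form_of_dvd_left hq' hc (hu.2 ⟨ha, hc⟩) hqv hqQ
  · exact not_dvd_form_of_dvd_right hq' ha (fun h => ha (hu.1 h).1) (hv.2 ha) hqQ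

lemma exists_equivalent_form_isCoprime {a b c : ℤ} (hprim : Int.gcd a (Int.gcd b c) = 1)
    (ha : 0 < a) (hdisc : b ^ 2 - 4 * a * c < 0) {M : ℕ} (hM : M ≠ 0) :
    ∃ a' b' c' : ℤ, 0 < a' ∧ b' ^ 2 - 4 * a' * c' = b ^ 2 - 4 * a * c ∧ IsCoprime a' (M : ℤ) ∧
      ∀ x y : ℤ, ∃ x' y' : ℤ,
        a * x' ^ 2 + b * x' * y' + c * y' ^ 2 = a' * x ^ 2 + b' * x * y + c' * y ^ 2 := by
  obtain ⟨u, v, huv, hM'⟩ := exists_isCoprime_form hprim hM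
  have hpos := form_pos ha hdisc huv.ne_zero_or_ne_zero
  obtain ⟨s, r, hsr⟩ := huv
  -- The substitution `(x, y) ↦ (u x - r y, v x + s y)` has determinant `s u + r v = 1`.
  refine ⟨a * u ^ 2 + b * u * v + c * v ^ 2,
    -2 * a * u * r + b * (u * s - r * v) + 2 * c * v * s, a * r ^ 2 - b * r * s + c * s ^ 2, hpos,
    ?_, hM', fun x y => ⟨u * x - r * y, v * x + s * y, by ring⟩⟩
  linear_combination (b ^ 2 - 4 * a * c) * (s * u + r * v + 1) * hsr

end EquivalentForm

section QuadraticRoot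

lemma re_eq_of_isRoot {z : ℂ} {b n : ℝ} (hz : z ^ 2 + b * z + n = 0) (him : z.im ≠ 0) :
    z.re = -b / 2 := by
  have h := congrArg Complex.im hz
  simp only [pow_two, Complex.add_im, Complex.mul_im, Complex.ofReal_re, Complex.ofReal_im,
    zero_mul, add_zero, Complex.zero_im] at h
  exact mul_left_cancel₀ him (by linear_combination h / 2)

lemma im_sq_eq_of_isRoot {z : ℂ} {b n : ℝ} (hz : z ^ 2 + b * z + n = 0) (him : z.im ≠ 0) :
    z.im ^ 2 = n - b ^ 2 / 4 := by
  have h := congrArg Complex.re hz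
  simp only [pow_two, Complex.add_re, Complex.mul_re, Complex.ofReal_re, Complex.ofReal_im,
    zero_mul, sub_zero, Complex.zero_re, re_eq_of_isRoot hz him] at h
  linear_combination -h

lemma norm_sub_mul_sq_of_isRoot {z : ℂ} {b n : ℝ} (hz : z ^ 2 + b * z + n = 0) (him : z.im ≠ 0)
    (x y : ℝ) : ‖x - y * z‖ ^ 2 = x ^ 2 + b * x * y + n * y ^ 2 := by
  rw [Complex.sq_norm, Complex.normSq_apply]
  simp only [Complex.sub_re, Complex.sub_im, Complex.mul_re, Complex.mul_im, Complex.ofReal_re,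
    Complex.ofReal_im, zero_mul, sub_zero, add_zero, zero_sub, re_eq_of_isRoot hz him]
  linear_combination y ^ 2 * im_sq_eq_of_isRoot hz him

lemma exists_isRoot_of_disc_neg {b n : ℝ} (hdisc : b ^ 2 - 4 * n < 0) :
    ∃ z : ℂ, z ^ 2 + b * z + n = 0 ∧ z.im ≠ 0 := by
  have hD : 0 < 4 * n - b ^ 2 := by linarith
  set s := √(4 * n - b ^ 2)
  have hs2 : s ^ 2 = 4 * n - b ^ 2 := Real.sq_sqrt hD.le
  refine ⟨⟨-b / 2, s / 2⟩, Complex.ext ?_ ?_, (half_pos (Real.sqrt_pos.2 hD)).ne'⟩ <;>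
    simp only [pow_two, Complex.add_re, Complex.add_im, Complex.mul_re, Complex.mul_im,
      Complex.ofReal_re, Complex.ofReal_im, Complex.zero_re, Complex.zero_im]
  · linear_combination (-1 / 4) * hs2
  · ring

end QuadraticRoot

section FormIdeal

variable {O : Type*} [CommRing O]

lemma intCast_add_intCast_mul_inj {φ : O →+* ℂ} {τ : O} (him : (φ τ).im ≠ 0) {k l k' l' : ℤ}
    (h : (k : O) + l * τ = k' + l' * τ) : k = k' ∧ l = l' := by
  have hφ := congrArg φ h
  simp only [map_add, map_mul, map_intCast] at hφ
  have hl : l = l' := by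
    have h := congrArg Complex.im hφ
    simp only [Complex.add_im, Complex.mul_im, Complex.intCast_im, Complex.intCast_re, zero_mul,
      add_zero, zero_add] at h
    exact_mod_cast mul_right_cancel₀ him h
  subst hl
  exact ⟨Int.cast_injective (α := ℂ) (add_right_cancel hφ), rfl⟩

lemma card_quotient_eq_natAbs {J : Ideal O} {a : ℤ} (hsurj : ∀ β : O, ∃ k : ℤ, (k : O) - β ∈ J)
    (hker : ∀ k : ℤ, (k : O) ∈ J ↔ a ∣ k) : Nat.card (O ⧸ J) = a.natAbs := by
  let f : ℤ →+* O ⧸ J := (Ideal.Quotient.mk J).comp (Int.castRingHom O)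
  have hf : Function.Surjective f := fun q => by
    obtain ⟨β, rfl⟩ := Ideal.Quotient.mk_surjective q
    obtain ⟨k, hk⟩ := hsurj β
    exact ⟨k, Ideal.Quotient.eq.2 hk⟩
  have hfker : RingHom.ker f = Ideal.span {a} := by
    ext k
    rw [RingHom.mem_ker, Ideal.mem_span_singleton, ← hker]
    exact Ideal.Quotient.eq_zero_iff_mem
  rw [← Nat.card_congr (RingHom.quotientKerEquivOfSurjective hf).toEquiv,
    Nat.card_congr (Ideal.quotEquivOfEq hfker).toEquiv,
    Nat.card_congr (Int.quotientSpanEquivZMod a).toEquiv, Nat.card_zmod]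

lemma map_isRoot (φ : O →+* ℂ) {b n : ℤ} {τ : O} (hτ : τ ^ 2 + b * τ + n = 0) :
    φ τ ^ 2 + (b : ℝ) * φ τ + (n : ℝ) = 0 := by
  have h := congrArg φ hτ
  simp only [map_add, map_mul, map_pow, map_intCast, map_zero] at h
  exact_mod_cast h

lemma isCoprime_span_pair {a M : ℤ} (hcop : IsCoprime a M) (τ : O) :
    IsCoprime (Ideal.span {(a : O), τ}) (Ideal.span {(M : O)}) := by
  have h := (Ideal.isCoprime_span_singleton_iff _ _).2 (hcop.map (Int.castRingHom O))
  rw [Ideal.isCoprime_iff_sup_eq] at h ⊢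
  exact top_le_iff.1 (h.ge.trans (sup_le_sup_right (Ideal.span_mono (by simp)) _))

section SpanPair

variable {a b c M : ℤ} {τ : O} (hτ : τ ^ 2 + b * τ + a * c = 0)
  (hinj : ∀ {k l k' l' : ℤ}, (k : O) + l * τ = k' + l' * τ → k = k' ∧ l = l')
  (hM : ∀ β : O, ∃ k l : ℤ, (M : O) * β = k + l * τ) (hcop : IsCoprime a M)
include hM hcop

include hτ hinj in
lemma dvd_of_mem_span_pair {k l : ℤ} (h : (k : O) + l * τ ∈ Ideal.span {(a : O), τ}) : a ∣ k := by
  obtain ⟨β, γ, h⟩ := Ideal.mem_span_pair.1 h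
  obtain ⟨k₁, l₁, hβ⟩ := hM β
  obtain ⟨k₂, l₂, hγ⟩ := hM γ
  have hMk : M * k = a * k₁ - a * c * l₂ := by
    refine (hinj (l := M * l) (l' := a * l₁ + k₂ - b * l₂) ?_).1
    push_cast
    linear_combination (-(M : O)) * h + (a : O) * hβ + τ * hγ + (l₂ : O) * hτ
  exact hcop.dvd_of_dvd_mul_left ⟨k₁ - c * l₂, by rw [hMk]; ring⟩

lemma exists_intCast_sub_mem_span_pair (β : O) :
    ∃ k : ℤ, (k : O) - β ∈ Ideal.span {(a : O), τ} := by
  obtain ⟨e, g, heg⟩ := hcop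
  have heg' : (e : O) * a + g * M = 1 := mod_cast congrArg (Int.cast : ℤ → O) heg
  obtain ⟨k, l, hβ⟩ := hM β
  refine ⟨g * k, Ideal.mem_span_pair.2 ⟨-(e * β), -(g * l), ?_⟩⟩
  push_cast
  linear_combination (-β) * heg' + (g : O) * hβ

include hτ hinj in
lemma absNorm_span_pair [IsDedekindDomain O] [Module.Free ℤ O] :
    Ideal.absNorm (Ideal.span {(a : O), τ}) = a.natAbs := by
  refine (Ideal.absNorm_apply _).trans (card_quotient_eq_natAbs
    (exists_intCast_sub_mem_span_pair hM hcop) fun k => ⟨fun hk => ?_, ?_⟩)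
  · exact dvd_of_mem_span_pair hτ hinj hM hcop (l := 0) (by simpa using hk)
  · rintro ⟨m, rfl⟩
    rw [Int.cast_mul]
    exact Ideal.mul_mem_right _ _ (Ideal.mem_span_pair.2 ⟨1, 0, by ring⟩)

include hτ hinj in
lemma exists_eq_of_mem_span_pair {α : O} (hα : α ∈ Ideal.span {(a : O), τ})
    (hαM : (M : O) ∣ α - 1) : ∃ x y : ℤ, α = a * x - y * τ := by
  obtain ⟨β, hβ⟩ := hαM
  obtain ⟨k, l, hkl⟩ := hM β
  have hα' : α = ((1 + k : ℤ) : O) + l * τ := by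
    push_cast
    linear_combination hβ + hkl
  rw [hα'] at hα
  obtain ⟨x, hx⟩ := dvd_of_mem_span_pair hτ hinj hM hcop hα
  refine ⟨x, -l, ?_⟩
  rw [hα', hx]
  push_cast
  ring

end SpanPair

namespace IsQuadraticEmbedding

variable [IsDedekindDomain O] [Module.Free ℤ O] {φ : O →+* ℂ} (hφ : IsQuadraticEmbedding φ)
include hφ

lemma nontrivial_quotient_span_natCast {M : ℕ} (hM : M ≠ 1) :
    Nontrivial (O ⧸ Ideal.span {(M : O)}) := by
  refine Ideal.Quotient.nontrivial_iff.2 fun h => hM ?_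
  have hnorm := hφ.norm_unit (Ideal.span_singleton_eq_top.1 h).unit
  rw [IsUnit.unit_spec, map_natCast, Complex.norm_natCast] at hnorm
  exact_mod_cast hnorm

lemma exists_intCast_eq_two_mul_re (β : O) : ∃ k : ℤ, (k : ℝ) = 2 * (φ β).re := by
  refine ⟨Ideal.absNorm (Ideal.span {β + 1}) - Ideal.absNorm (Ideal.span {β}) - 1, ?_⟩
  push_cast
  rw [hφ.absNorm_span, hφ.absNorm_span, map_add, map_one, Complex.sq_norm, Complex.sq_norm,
    Complex.normSq_add]
  simp only [map_one, mul_one]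
  ring

variable [Module.Finite ℤ O] {b n : ℤ} {τ : O} (hτ : τ ^ 2 + b * τ + n = 0) (him : (φ τ).im ≠ 0)
include hτ him

omit [Module.Finite ℤ O] in
lemma absNorm_span_sub_mul (k l : ℤ) :
    (Ideal.absNorm (Ideal.span {(k : O) - l * τ}) : ℤ) = k ^ 2 + b * k * l + n * l ^ 2 := by
  have h := hφ.absNorm_span (k - l * τ)
  have hz := norm_sub_mul_sq_of_isRoot (map_isRoot φ hτ) him k l
  simp only [map_sub, map_mul, map_intCast, Complex.ofReal_intCast] at h hz
  exact_mod_cast h.trans hz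

-- The coefficients are traces: `-b - τ` is the conjugate of `τ`.
lemma exists_disc_mul_eq (β : O) :
    ∃ k l : ℤ, ((4 * n - b ^ 2 : ℤ) : O) * β = k + l * τ := by
  have hz := map_isRoot φ hτ
  have hre := re_eq_of_isRoot hz him
  have him2 := im_sq_eq_of_isRoot hz him
  obtain ⟨u, hu⟩ := hφ.exists_intCast_eq_two_mul_re β
  obtain ⟨v, hv⟩ := hφ.exists_intCast_eq_two_mul_re (β * (-b - τ))
  simp only [map_mul, map_sub, map_neg, map_intCast, Complex.mul_re, Complex.sub_re, Complex.sub_im,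
    Complex.neg_re, Complex.neg_im, Complex.intCast_re, Complex.intCast_im, hre] at hv
  refine ⟨2 * n * u + v * b, 2 * v + b * u, hφ.injective (Complex.ext ?_ ?_)⟩ <;>
    simp only [map_add, map_mul, map_intCast, Complex.add_re, Complex.add_im, Complex.mul_re,
      Complex.mul_im, Complex.intCast_re, Complex.intCast_im, hre] <;>
    push_cast <;> rw [hv, hu]
  · ring
  · linear_combination (-4) * (φ β).im * him2

lemma exists_mul_eq_of_disc_dvd {M : ℤ} (hM : 4 * n - b ^ 2 ∣ M) (β : O) :
    ∃ k l : ℤ, (M : O) * β = k + l * τ := by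
  obtain ⟨m, rfl⟩ := hM
  obtain ⟨k, l, h⟩ := hφ.exists_disc_mul_eq hτ him β
  refine ⟨m * k, m * l, ?_⟩
  rw [Int.cast_mul, Int.cast_mul, Int.cast_mul]
  linear_combination (m : O) * h

omit hτ in
-- An ideal of norm `p` in the inverse ray class of `J = (a, τ)` yields `α = a x - y τ ∈ J` with
-- `a p = N(α) = a (a x² + b x y + c y²)`.
theorem exists_prime_form_of_isRoot [Finite (ClassGroup O)] {a c : ℤ} (ha : 0 < a)
    (hτ : τ ^ 2 + b * τ + (a * c : ℤ) = 0) {M : ℕ} (hM : 3 ≤ M)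
    (hdvd : 4 * (a * c) - b ^ 2 ∣ (M : ℤ)) (hcop : IsCoprime a (M : ℤ)) :
    ∃ p : ℕ, p.Prime ∧ ∃ x y : ℤ, a * x ^ 2 + b * x * y + c * y ^ 2 = p := by
  have hτ' : τ ^ 2 + b * τ + a * c = 0 := mod_cast hτ
  have hlat := hφ.exists_mul_eq_of_disc_dvd hτ him hdvd
  have hinj {k l k' l' : ℤ} : (k : O) + l * τ = k' + l' * τ → k = k' ∧ l = l' :=
    intCast_add_intCast_mul_inj him
  have hJ := isCoprime_span_pair hcop τ
  rw [Int.cast_natCast] at hJ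
  have := RingHom.charZero φ
  have := hφ.nontrivial_quotient_span_natCast (M := M) (by omega)
  have hM0 : (M : O) ≠ 0 := Nat.cast_ne_zero.2 (by omega)
  obtain ⟨I, α, hI, hα, hIJ⟩ := hφ.exists_prime_absNorm_mul_eq_span
    (mt Ideal.span_singleton_eq_bot.1 hM0) (fun _ => hφ.unit_eq_one_of_mk_eq_one hM) hJ
  have hαJ : α ∈ Ideal.span {(a : O), τ} :=
    Ideal.mul_le_right (I := I) (hIJ ▸ Ideal.mem_span_singleton_self α)
  have hαM : ((M : ℤ) : O) ∣ α - 1 := by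
    rwa [Int.cast_natCast, ← Ideal.mem_span_singleton, ← Ideal.Quotient.eq, map_one]
  obtain ⟨x, y, rfl⟩ := exists_eq_of_mem_span_pair hτ' hinj hlat hcop hαJ hαM
  refine ⟨_, hI, x, y, ?_⟩
  have hnorm := hφ.absNorm_span_sub_mul hτ him (a * x) y
  rw [Int.cast_mul, ← hIJ, map_mul, absNorm_span_pair hτ' hinj hlat hcop, Nat.cast_mul,
    Int.natAbs_of_nonneg ha.le] at hnorm
  exact mul_left_cancel₀ ha.ne' (by linear_combination -hnorm)

end IsQuadraticEmbedding

end FormIdeal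

section QuadraticField

open NumberField

lemma card_infinitePlace_eq_one {K : Type*} [Field K] [NumberField K]
    (hK : Module.finrank ℚ K = 2) {w : InfinitePlace K} (hw : w.IsComplex) :
    Fintype.card (InfinitePlace K) = 1 := by
  classical
  have hpos : 0 < InfinitePlace.nrComplexPlaces K := Fintype.card_pos_iff.2 ⟨⟨w, hw⟩⟩
  have hrank := InfinitePlace.card_add_two_mul_card_eq_rank K
  have hcard := InfinitePlace.card_eq_nrRealPlaces_add_nrComplexPlaces K
  omega

lemma isQuadraticEmbedding_ringOfIntegers {K : Type*} [Field K] [NumberField K]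
    (hK : Module.finrank ℚ K = 2) {ψ : K →+* ℂ} (hψ : ∃ γ : 𝓞 K, (ψ γ).im ≠ 0) :
    IsQuadraticEmbedding (ψ.comp (algebraMap (𝓞 K) K)) := by
  refine ⟨fun α => ?_, hψ⟩
  obtain ⟨γ, hγ⟩ := hψ
  have hw : (InfinitePlace.mk ψ).IsComplex := by
    refine InfinitePlace.isComplex_mk_iff.2 fun h => hγ (Complex.conj_eq_iff_im.1 ?_)
    exact RingHom.congr_fun (ComplexEmbedding.isReal_iff.1 h) γ
  have hnorm := InfinitePlace.prod_eq_abs_norm (α : K)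
  have := Fintype.card_le_one_iff_subsingleton.1 (card_infinitePlace_eq_one hK hw).le
  rw [Fintype.prod_subsingleton _ (InfinitePlace.mk ψ), hw.mult_eq_two,
    InfinitePlace.apply] at hnorm
  rw [RingHom.comp_apply, hnorm, Ideal.absNorm_span_singleton, ← Algebra.coe_norm_int]
  simp [Nat.cast_natAbs]

open Polynomial in
lemma isIntegral_of_isRoot {R : Type*} [CommRing R] {x : R} {b n : ℤ}
    (hx : x ^ 2 + b * x + n = 0) : IsIntegral ℤ x := by
  refine ⟨X ^ 2 + C b * X + C n, by monicity!, ?_⟩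
  simp only [eval₂_add, eval₂_mul, eval₂_pow, eval₂_X, eval₂_C]
  exact hx

open Polynomial IntermediateField in
lemma finrank_adjoin_eq_two {z : ℂ} {b n : ℤ} (hz : z ^ 2 + b * z + n = 0) (him : z.im ≠ 0) :
    Module.finrank ℚ ℚ⟮z⟯ = 2 := by
  have hint : IsIntegral ℚ z := (isIntegral_of_isRoot hz).tower_top
  rw [IntermediateField.adjoin.finrank hint]
  refine le_antisymm ?_ ((minpoly.two_le_natDegree_iff hint).2 ?_)
  · have hdeg : (X ^ 2 + C (b : ℚ) * X + C (n : ℚ)).natDegree = 2 := by compute_degree!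
    rw [← hdeg]
    refine natDegree_le_of_dvd (minpoly.dvd _ _ ?_) (ne_zero_of_natDegree_gt (n := 0) (by omega))
    simpa using hz
  · rintro ⟨x, rfl⟩
    exact him (Complex.ratCast_im x)

end QuadraticField

open IntermediateField NumberField in
theorem exists_prime_form_of_isCoprime {a b c : ℤ} (ha : 0 < a) (hdisc : b ^ 2 - 4 * a * c < 0)
    {M : ℕ} (hM : 3 ≤ M) (hdvd : 4 * a * c - b ^ 2 ∣ (M : ℤ)) (hcop : IsCoprime a (M : ℤ)) :
    ∃ p : ℕ, p.Prime ∧ ∃ x y : ℤ, a * x ^ 2 + b * x * y + c * y ^ 2 = p := by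
  rw [mul_assoc] at hdisc hdvd
  obtain ⟨z, hz, him⟩ := exists_isRoot_of_disc_neg (b := b) (n := (a * c : ℤ)) (mod_cast hdisc)
  rw [Complex.ofReal_intCast, Complex.ofReal_intCast] at hz
  have hrank := finrank_adjoin_eq_two hz him
  have : FiniteDimensional ℚ ℚ⟮z⟯ := Module.finite_of_finrank_pos (by omega)
  have : NumberField ℚ⟮z⟯ := ⟨⟩
  have hgen : AdjoinSimple.gen ℚ z ^ 2 + b * AdjoinSimple.gen ℚ z + (a * c : ℤ) = 0 :=
    Subtype.ext (by simpa using hz)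
  let τ : 𝓞 ℚ⟮z⟯ := ⟨AdjoinSimple.gen ℚ z, isIntegral_of_isRoot hgen⟩
  have hτ : τ ^ 2 + b * τ + (a * c : ℤ) = 0 := RingOfIntegers.ext <| by
    simp only [map_add, map_mul, map_pow, map_intCast, map_zero]
    exact hgen
  have hφ := isQuadraticEmbedding_ringOfIntegers hrank (ψ := algebraMap ℚ⟮z⟯ ℂ) ⟨τ, him⟩
  exact hφ.exists_prime_form_of_isRoot (τ := τ) him ha hτ hM hdvd hcop

/-- A primitive positive definite integral binary quadratic form represents some
prime number. -/
theorem exists_prime_represented (a b c : ℤ)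
    (hprim : Int.gcd a (Int.gcd b c) = 1) (ha : 0 < a)
    (hdisc : b ^ 2 - 4 * a * c < 0) :
    ∃ p : ℕ, p.Prime ∧ ∃ x y : ℤ, a * x ^ 2 + b * x * y + c * y ^ 2 = (p : ℤ) := by
  obtain ⟨d, hd⟩ := Int.eq_ofNat_of_zero_le (show 0 ≤ 4 * a * c - b ^ 2 by linarith)
  obtain ⟨a', b', c', ha', hdisc', hcop, hrep⟩ :=
    exists_equivalent_form_isCoprime hprim ha hdisc (M := 3 * d) (by omega)
  have hd' : 4 * a' * c' - b' ^ 2 = d := by linarith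
  have hdvd : 4 * a' * c' - b' ^ 2 ∣ ((3 * d : ℕ) : ℤ) := ⟨3, by rw [hd']; push_cast; ring⟩
  obtain ⟨p, hp, x, y, hxy⟩ :=
    exists_prime_form_of_isCoprime ha' (hdisc' ▸ hdisc) (M := 3 * d) (by omega) hdvd hcop
  obtain ⟨x', y', h⟩ := hrep x y
  exact ⟨p, hp, x', y', h.trans hxy⟩
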